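/- arXiv:1502.04354 — 6 statements merged into one kernel-verified Lean document; each statement's English description precedes it below -/
import Mathlib

section
/- There exists an absolute constant c > 0 such that for every ε with 0 < ε < 1/4, every δ with 0 < δ < 1/3, every natural number ℓ, and every function f : {0,1}^ℓ → {0,1}, if under ℓ i.i.d. Bernoulli(1/2 + ε) samples f outputs 1 with probability at least 1 − δ, and under ℓ i.i.d. Bernoulli(1/2 − ε) samples f outputs 0 with probability at least 1 − δ, then ℓ ≥ (c/ε²)·ln(1/δ). Consequently, any algorithm solving the (ε, δ)-winner determination problem for the plurality voting rule requires Ω((1/ε²)·log(1/δ)) sampled votes. -/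
/-- The product weights sum to one. -/
lemma prod_weights_sum (ℓ : ℕ) (a b : ℝ) (hab : a + b = 1) :
    ∑ ω : Fin ℓ → Bool, ∏ i : Fin ℓ, (if ω i = true then a else b) = 1 := by
  have h := Finset.prod_univ_sum (fun _ : Fin ℓ => (Finset.univ : Finset Bool))
    (fun _ x => if x = true then a else b)
  rw [Fintype.piFinset_univ] at h
  rw [← h]
  simp [hab]

lemma four_mul_pow_le (δ : ℝ) (h0 : 0 < δ) (h1 : δ < 1 / 3) :
    (4 * δ * (1 - δ)) ^ 24 ≤ δ := by
  have hn : 0 ≤ 4 * δ * (1 - δ) := by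
    have : 0 ≤ 1 - δ := by linarith
    positivity
  rcases le_total δ (1 / 16) with h | h
  · have h2 : (4 * δ * (1 - δ)) ^ 2 ≤ δ := by
      calc (4 * δ * (1 - δ)) ^ 2 ≤ (4 * δ) ^ 2 := by
            apply pow_le_pow_left₀ hn
            nlinarith
        _ ≤ δ := by nlinarith
    calc (4 * δ * (1 - δ)) ^ 24 ≤ (4 * δ * (1 - δ)) ^ 2 :=
          pow_le_pow_of_le_one hn (by nlinarith [sq_nonneg (1 - 2 * δ)]) (by norm_num)
      _ ≤ δ := h2
  · calc (4 * δ * (1 - δ)) ^ 24 ≤ (8 / 9 : ℝ) ^ 24 := by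
          apply pow_le_pow_left₀ hn
          nlinarith
      _ ≤ 1 / 16 := by norm_num
      _ ≤ δ := h

/-- Distinguishing Bernoulli(1/2+ε) from Bernoulli(1/2-ε) with error probability δ
requires ℓ ≥ (c/ε²)·ln(1/δ) samples; consequently, the (ε,δ)-winner determination
problem for the plurality rule requires Ω((1/ε²)·log(1/δ)) sampled votes. -/
theorem bernoulli_distinguishing_lower_bound :
    ∃ c : ℝ, 0 < c ∧
      ∀ (ε δ : ℝ), 0 < ε → ε < 1 / 4 → 0 < δ → δ < 1 / 3 →
      ∀ (ℓ : ℕ) (f : (Fin ℓ → Bool) → Bool),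
        1 - δ ≤ (∑ ω : Fin ℓ → Bool,
          if f ω = true then (∏ i : Fin ℓ, if ω i = true then 1 / 2 + ε else 1 / 2 - ε)
          else (0 : ℝ)) →
        1 - δ ≤ (∑ ω : Fin ℓ → Bool,
          if f ω = false then (∏ i : Fin ℓ, if ω i = true then 1 / 2 - ε else 1 / 2 + ε)
          else (0 : ℝ)) →
        c / ε ^ 2 * Real.log (1 / δ) ≤ (ℓ : ℝ) := by
  refine ⟨1 / 128, by norm_num, ?_⟩
  intro ε δ he0 he1 hd0 hd1 ℓ f hP hQ
  set P : (Fin ℓ → Bool) → ℝ := fun ω => ∏ i : Fin ℓ, if ω i = true then 1 / 2 + ε else 1 / 2 - ε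
    with hPdef
  set Q : (Fin ℓ → Bool) → ℝ := fun ω => ∏ i : Fin ℓ, if ω i = true then 1 / 2 - ε else 1 / 2 + ε
    with hQdef
  have sP : ∑ ω, P ω = 1 := prod_weights_sum ℓ _ _ (by ring)
  have sQ : ∑ ω, Q ω = 1 := prod_weights_sum ℓ _ _ (by ring)
  have nP : ∀ ω, 0 ≤ P ω := fun ω => Finset.prod_nonneg fun i _ => by split_ifs <;> linarith
  have nQ : ∀ ω, 0 ≤ Q ω := fun ω => Finset.prod_nonneg fun i _ => by split_ifs <;> linarith
  have hx : 0 ≤ 1 / 4 - ε ^ 2 := by nlinarith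
  obtain ⟨s, hs⟩ : ∃ s : ℝ, s = Real.sqrt (1 / 4 - ε ^ 2) ^ ℓ := ⟨_, rfl⟩
  have hs2 : s ^ 2 = (1 / 4 - ε ^ 2) ^ ℓ := by
    rw [hs, ← pow_mul, mul_comm, pow_mul, Real.sq_sqrt hx]
  have hPQ : ∀ ω, s ^ 2 = P ω * Q ω := by
    intro ω
    rw [hs2, hPdef, hQdef]
    simp only
    rw [← Finset.prod_mul_distrib, Finset.prod_congr rfl (g := fun _ => 1 / 4 - ε ^ 2)]
    · simp
    · intro i _
      split_ifs <;> ring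
  have hP' : 1 - δ ≤ ∑ ω with f ω = true, P ω := by rw [Finset.sum_filter]; exact hP
  have hQ' : 1 - δ ≤ ∑ ω with ¬ f ω = true, Q ω := by
    simp only [Bool.not_eq_true]; rw [Finset.sum_filter]; exact hQ
  have tP := Finset.sum_filter_add_sum_filter_not Finset.univ (fun ω => f ω = true) P
  have tQ := Finset.sum_filter_add_sum_filter_not Finset.univ (fun ω => f ω = true) Q
  have tS := Finset.sum_filter_add_sum_filter_not Finset.univ (fun ω => f ω = true) (fun _ => s)
  rw [sP] at tP
  rw [sQ] at tQ
  have cA := Finset.sum_sq_le_sum_mul_sum_of_sq_eq_mul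
    (Finset.univ.filter (fun ω => f ω = true)) (r := fun _ => s)
    (fun ω _ => nP ω) (fun ω _ => nQ ω) (fun ω _ => hPQ ω)
  have cB := Finset.sum_sq_le_sum_mul_sum_of_sq_eq_mul
    (Finset.univ.filter (fun ω => ¬ f ω = true)) (r := fun _ => s)
    (fun ω _ => nP ω) (fun ω _ => nQ ω) (fun ω _ => hPQ ω)
  have hT : (∑ ω : Fin ℓ → Bool, s) ^ 2 = (1 - 4 * ε ^ 2) ^ ℓ := by
    simp only [Finset.sum_const, Finset.card_univ, Fintype.card_pi, Fintype.card_bool,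
      Finset.prod_const, Fintype.card_fin, nsmul_eq_mul, Nat.cast_pow, Nat.cast_ofNat]
    rw [mul_pow, hs2, ← pow_mul, mul_comm ℓ 2, pow_mul, ← mul_pow]
    congr 1
    ring
  rw [← tS] at hT
  generalize (∑ ω with f ω = true, P ω) = p at *
  generalize (∑ ω with f ω = true, Q ω) = q at *
  generalize (∑ ω with ¬ f ω = true, P ω) = u at *
  generalize (∑ ω with ¬ f ω = true, Q ω) = v at *
  generalize (∑ ω : Fin ℓ → Bool with f ω = true, s) = a at *
  generalize (∑ ω : Fin ℓ → Bool with ¬ f ω = true, s) = b at *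
  have hp : p = 1 - u := by linarith
  have hv : v = 1 - q := by linarith
  subst hp hv
  have key : (1 - 4 * ε ^ 2) ^ ℓ ≤ 4 * δ * (1 - δ) := by
    rw [← hT]
    have h1 : 0 ≤ (δ - u) * (1 - 2 * q) := mul_nonneg (by linarith) (by linarith)
    have h2 : 0 ≤ (δ - q) * (1 - 2 * δ) := mul_nonneg (by linarith) (by linarith)
    nlinarith [sq_nonneg (a - b)]
  have hy : 3 / 4 ≤ 1 - 4 * ε ^ 2 := by nlinarith
  have hy0 : 0 < 1 - 4 * ε ^ 2 := by linarith
  have key2 : ((1 - 4 * ε ^ 2) ^ ℓ) ^ 24 ≤ δ :=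
    (pow_le_pow_left₀ (by positivity) key 24).trans (four_mul_pow_le δ hd0 hd1)
  have key3 := Real.log_le_log (by positivity) key2
  rw [Real.log_pow, Real.log_pow] at key3
  have hl := Real.one_sub_inv_le_log_of_pos hy0
  have hl2 : -(16 / 3) * ε ^ 2 ≤ 1 - (1 - 4 * ε ^ 2)⁻¹ := by
    have : (1 - 4 * ε ^ 2)⁻¹ ≤ 1 + 16 / 3 * ε ^ 2 := by
      rw [inv_le_iff_one_le_mul₀ hy0]
      nlinarith [mul_nonneg (sq_nonneg ε) (sub_nonneg.2 hy)]
    linarith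
  have hm : (ℓ : ℝ) * (-(16 / 3) * ε ^ 2) ≤ ℓ * Real.log (1 - 4 * ε ^ 2) :=
    mul_le_mul_of_nonneg_left (hl2.trans hl) (Nat.cast_nonneg _)
  have he : 0 < ε ^ 2 := by positivity
  rw [one_div δ, Real.log_inv, div_mul_eq_mul_div, div_le_iff₀ he]
  push_cast at key3
  linarith
end

section
/- For every real ε with 0 < ε < 1 and all reals k, M with 0 < k < M, the following inequality holds: (ε + (1 − ε)·(k/M))·ln((1 − ε) + ε·(M/k)) + (1 − ε)·(1 − k/M)·ln(1 − ε) ≤ ε²·(M/k − 1). -/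
/-- KL-divergence bound used in the sample-complexity lower bound for k-approval. -/
theorem kl_divergence_bound_kapproval
    (ε k M : ℝ) (hε0 : 0 < ε) (hε1 : ε < 1) (hk : 0 < k) (hkM : k < M) :
    (ε + (1 - ε) * (k / M)) * Real.log ((1 - ε) + ε * (M / k))
      + (1 - ε) * (1 - k / M) * Real.log (1 - ε)
      ≤ ε ^ 2 * (M / k - 1) := by
  have hM : 0 < M := hk.trans hkM
  have he : 0 < 1 - ε := by linarith
  have hp : 0 < k / M := div_pos hk hM
  have hp1 : k / M < 1 := (div_lt_one hM).2 hkM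
  have hq : 0 < M / k := div_pos hM hk
  have h1 := Real.log_le_sub_one_of_pos (x := (1 - ε) + ε * (M / k)) (by positivity)
  have h2 := Real.log_le_sub_one_of_pos he
  have h3 := mul_le_mul_of_nonneg_left h1
    (show 0 ≤ ε + (1 - ε) * (k / M) by positivity)
  have h4 := mul_le_mul_of_nonneg_left h2
    (show 0 ≤ (1 - ε) * (1 - k / M) from mul_nonneg he.le (by linarith))
  refine (add_le_add h3 h4).trans (le_of_eq ?_)
  field_simp
  ring
end

section
/- There exists a constant K > 0 such that the following holds for the approval voting rule. Let V be an approval election with n votes over m candidates whose margin of victory is at least εn, with winner w, and let δ ∈ (0,1). If ℓ ≥ K·ln(m/δ)/ε² and we draw ℓ votes i.i.d. uniformly at random (with replacement) from V, then with probability at least 1 − δ, the empirical approval score ŝ(w) = (n/ℓ)·(number of sampled votes approving w) strictly exceeds ŝ(x) for every candidate x ≠ w; in particular, the candidate with maximum empirical approval score equals w. -/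
/-- In an approval election, each vote is the set of approved candidates; the
approval score of a candidate is the number of votes approving it. -/
noncomputable def approvalScore {m n : ℕ} (V : Fin n → Finset (Fin m)) (x : Fin m) : ℕ :=
  Nat.card {i : Fin n // x ∈ V i}

open Finset in
lemma score_eq {m n : ℕ} (V : Fin n → Finset (Fin m)) (x : Fin m) :
    approvalScore V x = #{i | x ∈ V i} := by
  unfold approvalScore
  rw [Nat.card_eq_fintype_card, Fintype.card_subtype]

lemma score_cast {m n : ℕ} (V : Fin n → Finset (Fin m)) (x : Fin m) :
    (approvalScore V x : ℝ) = ∑ i, if x ∈ V i then (1 : ℝ) else 0 := by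
  rw [score_eq]; simp

open Finset in
lemma gap {m n : ℕ} (ε : ℝ) (V : Fin n → Finset (Fin m)) (w x : Fin m) (hx : x ≠ w)
    (hlt : approvalScore V x < approvalScore V w)
    (hV : ∀ V' : Fin n → Finset (Fin m),
          (∃ x : Fin m, x ≠ w ∧ approvalScore V' w ≤ approvalScore V' x) →
          ε * n ≤ (Nat.card {i : Fin n // V' i ≠ V i} : ℝ)) :
    ε * n ≤ (approvalScore V w : ℝ) - approvalScore V x := by
  classical
  have hle : approvalScore V w - approvalScore V x ≤
      #((({i | w ∈ V i} : Finset (Fin n))) \ ({i | x ∈ V i} : Finset (Fin n))) := by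
    rw [score_eq, score_eq]
    exact Finset.le_card_sdiff _ _
  obtain ⟨T, hT, hTc⟩ := Finset.exists_subset_card_eq hle
  have h := hV (fun i => if i ∈ T then (V i).erase w else V i) ⟨x, hx, ?_⟩
  · refine h.trans ?_
    rw [← Nat.cast_sub hlt.le, ← hTc, Nat.card_eq_fintype_card, Fintype.card_subtype]
    norm_cast
    apply Finset.card_le_card
    intro i hi
    by_contra hc
    simp [hc] at hi
  · have h1 : approvalScore (fun i => if i ∈ T then (V i).erase w else V i) x
        = approvalScore V x := by
      rw [score_eq, score_eq]
      congr 1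
      ext i
      by_cases hi : i ∈ T <;> simp [hi, hx]
    have h2 : approvalScore (fun i => if i ∈ T then (V i).erase w else V i) w
        = approvalScore V w - #T := by
      rw [score_eq, score_eq, ← Finset.card_sdiff_of_subset]
      · congr 1
        ext i
        by_cases hi : i ∈ T <;> simp [hi]
      · exact hT.trans Finset.sdiff_subset
    rw [h1, h2, hTc]
    omega

open Finset in
lemma bad_bound {m n : ℕ} (ε : ℝ) (h0 : 0 < ε) (h1 : ε < 1)
    (V : Fin n → Finset (Fin m)) (w x : Fin m)
    (hd : ε * n ≤ (approvalScore V w : ℝ) - approvalScore V x) (l : ℕ) :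
    (#{s : Fin l → Fin n | approvalScore (fun j => V (s j)) w ≤
        approvalScore (fun j => V (s j)) x} : ℝ) ≤ (n * Real.exp (-ε ^ 2 / 4)) ^ l := by
  classical
  set z : Fin n → ℝ := fun i => (if w ∈ V i then (1 : ℝ) else 0) - (if x ∈ V i then 1 else 0)
    with hz
  have hzs : ε * n ≤ ∑ i, z i := by
    simpa only [hz, Finset.sum_sub_distrib, score_cast] using hd
  have hz1 : ∀ i, z i ^ 2 ≤ 1 := by
    intro i
    simp only [hz]
    split_ifs <;> norm_num
  have hsum : ∑ i, Real.exp (-(ε / 2) * z i) ≤ n * Real.exp (-ε ^ 2 / 4) := by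
    have hb : ∀ i, Real.exp (-(ε / 2) * z i) ≤ 1 - (ε / 2) * z i + (ε / 2) ^ 2 := by
      intro i
      have habs : |-(ε / 2) * z i| ≤ 1 := by
        rw [← sq_le_one_iff_abs_le_one]
        have he : (ε / 2) ^ 2 ≤ 1 := by nlinarith
        calc (-(ε / 2) * z i) ^ 2 = (ε / 2) ^ 2 * z i ^ 2 := by ring
          _ ≤ 1 := mul_le_one₀ he (sq_nonneg _) (hz1 i)
      have := (abs_le.mp (Real.abs_exp_sub_one_sub_id_le habs)).2
      nlinarith [hz1 i, mul_le_mul_of_nonneg_left (hz1 i) (sq_nonneg (ε / 2))]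
    calc ∑ i, Real.exp (-(ε / 2) * z i)
        ≤ ∑ i, (1 - (ε / 2) * z i + (ε / 2) ^ 2) := Finset.sum_le_sum fun i _ => hb i
      _ = n - (ε / 2) * ∑ i, z i + n * (ε / 2) ^ 2 := by
          rw [Finset.sum_add_distrib, Finset.sum_sub_distrib, ← Finset.mul_sum]; simp
      _ ≤ n * (-ε ^ 2 / 4 + 1) := by nlinarith
      _ ≤ _ := by
          gcongr
          exact Real.add_one_le_exp _
  calc (#{s : Fin l → Fin n | approvalScore (fun j => V (s j)) w ≤
        approvalScore (fun j => V (s j)) x} : ℝ)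
      = ∑ s : Fin l → Fin n, if approvalScore (fun j => V (s j)) w ≤
        approvalScore (fun j => V (s j)) x then (1 : ℝ) else 0 := by simp
    _ ≤ ∑ s : Fin l → Fin n, ∏ j, Real.exp (-(ε / 2) * z (s j)) := by
        refine Finset.sum_le_sum fun s _ => ?_
        rw [← Real.exp_sum, ← Finset.mul_sum]
        split_ifs with h
        · have h' : (approvalScore (fun j => V (s j)) w : ℝ) ≤
            approvalScore (fun j => V (s j)) x := by exact_mod_cast h
          rw [score_cast, score_cast] at h'
          have : ∑ j, z (s j) ≤ 0 := by
            simp only [hz, Finset.sum_sub_distrib]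
            linarith
          apply Real.one_le_exp
          nlinarith
        · positivity
    _ = (∑ i, Real.exp (-(ε / 2) * z i)) ^ l := 
        (Fintype.sum_pow (fun i => Real.exp (-(ε / 2) * z i)) l).symm
    _ ≤ _ := pow_le_pow_left₀ (Finset.sum_nonneg fun i _ => (Real.exp_pos _).le) hsum _

/-- Sample complexity O(log(m/δ)/ε²) for winner determination under the approval
voting rule: if the margin of victory is at least εn with unique winner w and
ℓ ≥ K·ln(m/δ)/ε², then on at least a (1-δ) fraction of the n^ℓ equiprobable tuples
of ℓ i.i.d. uniform vote samples, the empirical approval score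
ŝ(x) = (n/ℓ)·(number of sampled votes approving x) of w strictly exceeds that of
every other candidate. -/
theorem approval_sample_complexity :
    ∃ K : ℝ, 0 < K ∧
      ∀ (m n : ℕ) (ε δ : ℝ), 0 < ε → ε < 1 → 0 < δ → δ < 1 →
      ∀ (V : Fin n → Finset (Fin m)) (w : Fin m),
        (∀ x : Fin m, x ≠ w → approvalScore V x < approvalScore V w) →
        (∀ V' : Fin n → Finset (Fin m),
          (∃ x : Fin m, x ≠ w ∧ approvalScore V' w ≤ approvalScore V' x) →
          ε * n ≤ (Nat.card {i : Fin n // V' i ≠ V i} : ℝ)) →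
        ∀ ℓ : ℕ, K * Real.log ((m : ℝ) / δ) / ε ^ 2 ≤ ℓ →
          (1 - δ) * (n : ℝ) ^ ℓ ≤
            (Nat.card {s : Fin ℓ → Fin n // ∀ x : Fin m, x ≠ w →
              (n : ℝ) / ℓ * (approvalScore (fun j => V (s j)) x : ℝ)
                < (n : ℝ) / ℓ * (approvalScore (fun j => V (s j)) w : ℝ)} : ℝ) := by
  classical
  refine ⟨4, by norm_num, ?_⟩
  intro m n ε δ h0 h1 hδ0 hδ1 V w hw hV ℓ hℓ
  have hm : (1 : ℝ) ≤ m := by exact_mod_cast w.pos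
  have hlog : 0 < Real.log ((m : ℝ) / δ) := by
    apply Real.log_pos
    rw [lt_div_iff₀ hδ0]; linarith
  have hℓ0 : (0 : ℝ) < ℓ := lt_of_lt_of_le (by positivity) hℓ
  have hexp : (m : ℝ) * Real.exp (-ε ^ 2 / 4) ^ ℓ ≤ δ := by
    rw [div_le_iff₀ (by positivity)] at hℓ
    have : Real.exp (-ε ^ 2 / 4) ^ ℓ ≤ δ / m := by
      rw [← Real.exp_nat_mul, ← Real.le_log_iff_exp_le (by positivity), ← inv_div (m : ℝ) δ,
        Real.log_inv]
      linarith
    calc (m : ℝ) * Real.exp (-ε ^ 2 / 4) ^ ℓ ≤ m * (δ / m) := by gcongr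
      _ = δ := by field_simp
  rw [Nat.card_eq_fintype_card, Fintype.card_subtype]
  set G : Finset (Fin ℓ → Fin n) := Finset.univ.filter fun s => ∀ x : Fin m, x ≠ w →
              (n : ℝ) / ℓ * (approvalScore (fun j => V (s j)) x : ℝ)
                < (n : ℝ) / ℓ * (approvalScore (fun j => V (s j)) w : ℝ) with hG
  let B : Fin m → Finset (Fin ℓ → Fin n) := fun x =>
    Finset.univ.filter fun s => approvalScore (fun j => V (s j)) w ≤
        approvalScore (fun j => V (s j)) x
  have hcov : Gᶜ ⊆ (Finset.univ.erase w).biUnion B := by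
    intro s hs
    simp only [hG, Finset.mem_compl, Finset.mem_filter, Finset.mem_univ, true_and, not_forall,
      not_lt] at hs
    obtain ⟨x, hx, hle⟩ := hs
    have hn : 0 < n := by
      rcases Nat.eq_zero_or_pos n with rfl | h
      · have := hw x hx
        simp [score_eq] at this
      · exact h
    have hn' : (0 : ℝ) < n := by exact_mod_cast hn
    have := le_of_mul_le_mul_left hle (by positivity)
    simp only [Finset.mem_biUnion, Finset.mem_erase, Finset.mem_univ, and_true, B,
      Finset.mem_filter, true_and]
    exact ⟨x, hx, by exact_mod_cast this⟩
  have hbad : ((Gᶜ).card : ℝ) ≤ δ * (n : ℝ) ^ ℓ := by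
    calc ((Gᶜ).card : ℝ) ≤ (((Finset.univ.erase w).biUnion B).card : ℝ) := by
          exact_mod_cast Finset.card_le_card hcov
      _ ≤ ∑ x ∈ Finset.univ.erase w, ((B x).card : ℝ) := by
          exact_mod_cast Finset.card_biUnion_le
      _ ≤ ∑ x ∈ Finset.univ.erase w, (n * Real.exp (-ε ^ 2 / 4)) ^ ℓ := by
          refine Finset.sum_le_sum fun x hx => ?_
          have hx' := Finset.ne_of_mem_erase hx
          exact bad_bound ε h0 h1 V w x (gap ε V w x hx' (hw x hx') hV) ℓ
      _ ≤ ∑ x : Fin m, (n * Real.exp (-ε ^ 2 / 4)) ^ ℓ :=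
          Finset.sum_le_sum_of_subset_of_nonneg (Finset.erase_subset _ _)
            fun _ _ _ => by positivity
      _ = (m * Real.exp (-ε ^ 2 / 4) ^ ℓ) * n ^ ℓ := by
          simp [mul_pow]; ring
      _ ≤ _ := by gcongr
  have htot : (G.card : ℝ) + (Gᶜ).card = (n : ℝ) ^ ℓ := by
    have := Finset.card_add_card_compl G
    simp only [Fintype.card_fun, Fintype.card_fin] at this
    exact_mod_cast this
  linarith
end

section
/- Let λ > 0 and define f : ℝ → ℝ by f(x) = e^{−λ/x}. Then for all reals x, y with x > 0, y > 0, x < y, and λ/(x + y) > 2, we have f(x) + f(y) ≤ f(x + y). -/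
theorem exp_neg_le_inv_aux (a : ℝ) (ha : 0 < a) : Real.exp (-a) ≤ 1 / (1 + a) := by
  rw [Real.exp_neg, ← one_div]
  apply one_div_le_one_div_of_le (by linarith)
  linarith [Real.add_one_le_exp a]

/-- For f(x) = e^{-λ/x}: f(x) + f(y) ≤ f(x+y) when x, y > 0, x < y and λ/(x+y) > 2. -/
theorem exp_neg_div_superadditive
    (lam : ℝ) (hlam : 0 < lam) (x y : ℝ) (hx : 0 < x) (hy : 0 < y)
    (hxy : x < y) (h : 2 < lam / (x + y)) :
    Real.exp (-(lam / x)) + Real.exp (-(lam / y)) ≤ Real.exp (-(lam / (x + y))) := by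
  obtain ⟨m, hm⟩ : ∃ m, m = lam / (x + y) := ⟨_, rfl⟩
  have hs : 0 < x + y := by linarith
  have hl : lam = m * (x + y) := by rw [hm]; field_simp
  rw [← hm] at h ⊢
  have hm0 : 0 < m := by linarith
  have h1 : -(lam / x) = -m + -(m * (y / x)) := by rw [hl]; field_simp; ring
  have h2 : -(lam / y) = -m + -(m * (x / y)) := by rw [hl]; field_simp; ring
  rw [h1, h2, Real.exp_add, Real.exp_add, ← mul_add]
  have ha : 0 < m * (y / x) := by positivity
  have hb : 0 < m * (x / y) := by positivity
  have hab : (m * (y / x)) * (m * (x / y)) = m ^ 2 := by field_simp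
  have key : Real.exp (-(m * (y / x))) + Real.exp (-(m * (x / y))) ≤ 1 := by
    refine (add_le_add (exp_neg_le_inv_aux _ ha) (exp_neg_le_inv_aux _ hb)).trans ?_
    generalize m * (y / x) = a at *
    generalize m * (x / y) = b at *
    rw [div_add_div _ _ (by positivity) (by positivity), div_le_one (by positivity)]
    nlinarith
  exact mul_le_of_le_one_right (Real.exp_pos _).le key
end

section
/- There exists a constant K > 0 such that the following holds for the k-approval voting rule. Let V be an n-vote election (votes are linear orders over m candidates, and each candidate's k-approval score is the number of votes ranking it in the top k positions) whose margin of victory is at least εn, with winner w, and let δ ∈ (0,1). If ℓ ≥ K·ln(k/δ)/ε² and we draw ℓ votes i.i.d. uniformly at random (with replacement) from V, then with probability at least 1 − δ the candidate with maximum empirical k-approval score on the sample equals w. In particular, the sample complexity is independent of m, and for plurality (k = 1) it is independent of both m and n. -/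
/-- k-approval score of a candidate: the number of votes ranking it among the top k
positions. A vote is a permutation of `Fin m` (candidate `c` is ranked at position
`v c`, position `0` being the top). -/
noncomputable def kApprovalScore {m n : ℕ} (k : ℕ)
    (V : Fin n → Equiv.Perm (Fin m)) (x : Fin m) : ℕ :=
  Nat.card {i : Fin n // ((V i) x : ℕ) < k}


namespace KApp
open Finset
open scoped Classical
set_option linter.unusedSectionVars false
set_option linter.unusedVariables false

section generic
variable {Ω : Type*} [Fintype Ω] {l : ℕ}

/-- product weight of a sample -/
noncomputable def wt (q : Ω → ℝ) (f : Fin l → Ω) : ℝ := ∏ j, q (f j)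

/-- number of sample points in `S` -/
noncomputable def cnt (S : Finset Ω) (f : Fin l → Ω) : ℕ := #{j | f j ∈ S}

/-- probability of an event -/
noncomputable def pr (q : Ω → ℝ) (P : (Fin l → Ω) → Prop) : ℝ := ∑ f with P f, wt q f

lemma wt_nonneg {q : Ω → ℝ} (hq : ∀ a, 0 ≤ q a) (f : Fin l → Ω) : 0 ≤ wt q f :=
  Finset.prod_nonneg fun _ _ => hq _

lemma pr_nonneg {q : Ω → ℝ} (hq : ∀ a, 0 ≤ q a) (P : (Fin l → Ω) → Prop) : 0 ≤ pr q P :=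
  Finset.sum_nonneg fun _ _ => wt_nonneg hq _

lemma pr_mono {q : Ω → ℝ} (hq : ∀ a, 0 ≤ q a) {P Q : (Fin l → Ω) → Prop}
    (h : ∀ f, P f → Q f) : pr q P ≤ pr q Q := by
  apply Finset.sum_le_sum_of_subset_of_nonneg
  · intro f; simpa using h f
  · intro f _ _; exact wt_nonneg hq f

lemma pr_eq_ite (q : Ω → ℝ) (P : (Fin l → Ω) → Prop) :
    pr q P = ∑ f, wt q f * (if P f then 1 else 0) := by
  simp [pr, Finset.sum_filter]

lemma pr_or {q : Ω → ℝ} (hq : ∀ a, 0 ≤ q a) (P Q : (Fin l → Ω) → Prop) :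
    pr q (fun f => P f ∨ Q f) ≤ pr q P + pr q Q := by
  simp only [pr_eq_ite, ← Finset.sum_add_distrib, ← mul_add]
  apply Finset.sum_le_sum
  intro f _
  apply mul_le_mul_of_nonneg_left _ (wt_nonneg hq f)
  by_cases h1 : P f <;> by_cases h2 : Q f <;> simp [h1, h2]

lemma pr_exists {ι : Type*} {q : Ω → ℝ} (hq : ∀ a, 0 ≤ q a) (t : Finset ι)
    (P : ι → (Fin l → Ω) → Prop) :
    pr q (fun f => ∃ i ∈ t, P i f) ≤ ∑ i ∈ t, pr q (P i) := by
  simp only [pr_eq_ite]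
  rw [Finset.sum_comm]
  apply Finset.sum_le_sum
  intro f _
  rw [← Finset.mul_sum]
  apply mul_le_mul_of_nonneg_left _ (wt_nonneg hq f)
  split_ifs with h
  · obtain ⟨i, hi, hp⟩ := h
    have := Finset.single_le_sum (f := fun i => if P i f then (1:ℝ) else 0)
      (fun j _ => by positivity) hi
    simpa [hp] using this
  · exact Finset.sum_nonneg fun j _ => by positivity

lemma sum_prod_eq (g : Fin l → Ω → ℝ) :
    ∑ f : Fin l → Ω, ∏ j, g j (f j) = ∏ j, ∑ a, g j a := by
  rw [Finset.prod_univ_sum, Fintype.piFinset_univ]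

lemma sum_wt {q : Ω → ℝ} (h1 : ∑ a, q a = 1) : ∑ f : Fin l → Ω, wt q f = 1 := by
  simp [wt, sum_prod_eq (fun _ => q), h1]

lemma pr_compl {q : Ω → ℝ} (h1 : ∑ a, q a = 1) (P : (Fin l → Ω) → Prop) :
    pr q P + pr q (fun f => ¬ P f) = 1 := by
  rw [← sum_wt h1 (l := l)]
  simp only [pr_eq_ite, ← Finset.sum_add_distrib, ← mul_add]
  apply Finset.sum_congr rfl
  intro f _
  by_cases h : P f <;> simp [h]

lemma exp_cnt (S : Finset Ω) (s : ℝ) (f : Fin l → Ω) :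
    Real.exp (s * cnt S f) = ∏ j, (if f j ∈ S then Real.exp s else 1) := by
  rw [Finset.prod_ite]
  simp [cnt, ← Real.exp_nat_mul, mul_comm]

lemma sum_q_ite {q : Ω → ℝ} (h1 : ∑ a, q a = 1) (S : Finset Ω) (e : ℝ) :
    ∑ a, q a * (if a ∈ S then e else 1) = 1 + (∑ a ∈ S, q a) * (e - 1) := by
  have : ∀ a, q a * (if a ∈ S then e else 1) = q a + (if a ∈ S then q a else 0) * (e - 1) := by
    intro a; split_ifs <;> ring
  simp only [this, Finset.sum_add_distrib, h1, ← Finset.sum_mul]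
  simp

lemma mgf {q : Ω → ℝ} (h1 : ∑ a, q a = 1) (S : Finset Ω) (s : ℝ) :
    ∑ f : Fin l → Ω, wt q f * Real.exp (s * cnt S f)
      = (1 + (∑ a ∈ S, q a) * (Real.exp s - 1)) ^ l := by
  simp only [exp_cnt, wt, ← Finset.prod_mul_distrib]
  rw [sum_prod_eq (fun _ a => q a * (if a ∈ S then Real.exp s else 1))]
  simp only [sum_q_ite h1]
  simp

lemma mgf' {q : Ω → ℝ} (h1 : ∑ a, q a = 1) (S : Finset Ω) (s : ℝ) :
    ∑ f : Fin l → Ω, wt q f * (cnt S f * Real.exp (s * cnt S f))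
      = l * ((∑ a ∈ S, q a) * Real.exp s)
        * (1 + (∑ a ∈ S, q a) * (Real.exp s - 1)) ^ (l - 1) := by
  have hc : ∀ f : Fin l → Ω, (cnt S f : ℝ) = ∑ i, if f i ∈ S then (1:ℝ) else 0 := by
    intro f; simp [cnt]
  have key : ∀ i : Fin l, ∑ f : Fin l → Ω,
      wt q f * ((if f i ∈ S then (1:ℝ) else 0) * Real.exp (s * cnt S f))
      = ((∑ a ∈ S, q a) * Real.exp s)
        * (1 + (∑ a ∈ S, q a) * (Real.exp s - 1)) ^ (l - 1) := by
    intro i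
    have e : ∀ f : Fin l → Ω,
        wt q f * ((if f i ∈ S then (1:ℝ) else 0) * Real.exp (s * cnt S f))
        = ∏ j, (q (f j) * (if f j ∈ S then Real.exp s else 1)) *
            (if j = i then (if f j ∈ S then (1:ℝ) else 0) else 1) := by
      intro f
      rw [Finset.prod_mul_distrib, Finset.prod_mul_distrib, ← exp_cnt, wt]
      simp only [Finset.prod_ite_eq', Finset.mem_univ, if_true]
      ring
    simp only [e]
    rw [sum_prod_eq (fun j a => (q a * (if a ∈ S then Real.exp s else 1)) *
            (if j = i then (if a ∈ S then (1:ℝ) else 0) else 1))]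
    have e2 : ∀ j : Fin l, ∑ a, (q a * (if a ∈ S then Real.exp s else 1)) *
            (if j = i then (if a ∈ S then (1:ℝ) else 0) else 1)
        = if j = i then (∑ a ∈ S, q a) * Real.exp s
          else 1 + (∑ a ∈ S, q a) * (Real.exp s - 1) := by
      intro j
      by_cases h : j = i
      · simp only [h, if_true]
        rw [Finset.sum_mul, ← Finset.sum_filter_add_sum_filter_not univ (· ∈ S)]
        rw [Finset.sum_congr rfl (g := fun a => q a * Real.exp s)
          (by intro a ha; simp at ha; simp [ha])]
        rw [Finset.sum_congr rfl (s₁ := univ.filter fun a => ¬ a ∈ S) (g := fun a => 0)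
          (by intro a ha; simp at ha; simp [ha])]
        simp
      · simp only [h, if_false, mul_one]
        exact sum_q_ite h1 S _
    simp only [e2]
    rw [Finset.prod_ite]
    simp [Finset.filter_eq', Finset.filter_ne', Finset.card_erase_of_mem]
  have e3 : ∀ f : Fin l → Ω, wt q f * (cnt S f * Real.exp (s * cnt S f))
      = ∑ i, wt q f * ((if f i ∈ S then (1:ℝ) else 0) * Real.exp (s * cnt S f)) := by
    intro f
    rw [← Finset.mul_sum, ← Finset.sum_mul, ← hc]
  simp only [e3]
  rw [Finset.sum_comm]
  simp only [key]
  simp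
  ring

lemma sumS_nonneg {q : Ω → ℝ} (hq : ∀ a, 0 ≤ q a) (S : Finset Ω) : 0 ≤ ∑ a ∈ S, q a :=
  Finset.sum_nonneg fun a _ => hq a

/-- weighted Chernoff bound -/
lemma tail_up {q : Ω → ℝ} (hq : ∀ a, 0 ≤ q a) (h1 : ∑ a, q a = 1) (S : Finset Ω) (s a : ℝ)
    (hs : 0 ≤ s) (ha : 0 ≤ a) :
    a * pr q (fun f : Fin l → Ω => a ≤ cnt S f) ≤ Real.exp (-(s * a)) *
      (l * ((∑ a ∈ S, q a) * Real.exp s)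
        * (1 + (∑ a ∈ S, q a) * (Real.exp s - 1)) ^ (l - 1)) := by
  rw [← mgf' h1, pr_eq_ite, Finset.mul_sum, Finset.mul_sum]
  apply Finset.sum_le_sum
  intro f _
  have hw := wt_nonneg hq f
  split_ifs with h
  · have : a ≤ Real.exp (-(s*a)) * (cnt S f * Real.exp (s * cnt S f)) := by
      have e : Real.exp (-(s*a)) * (cnt S f * Real.exp (s * cnt S f))
        = cnt S f * Real.exp (s * (cnt S f - a)) := by
        rw [mul_left_comm, ← Real.exp_add]; ring_nf
      rw [e]
      have : 1 ≤ Real.exp (s * (cnt S f - a)) :=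
        Real.one_le_exp (mul_nonneg hs (sub_nonneg.2 h))
      nlinarith
    calc _ = wt q f * a := by ring
      _ ≤ wt q f * _ := mul_le_mul_of_nonneg_left this hw
      _ = _ := by ring
  · simp only [mul_zero]; positivity

lemma tail_markov {q : Ω → ℝ} (hq : ∀ a, 0 ≤ q a) (h1 : ∑ a, q a = 1) (S : Finset Ω) (a : ℝ)
    (ha : 0 ≤ a) :
    a * pr q (fun f : Fin l → Ω => a ≤ cnt S f) ≤ l * (∑ a ∈ S, q a) := by
  have := tail_up (l := l) hq h1 S 0 a le_rfl ha
  simpa using this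

lemma exp_quad {s : ℝ} (h : |s| ≤ 1) : Real.exp s - 1 ≤ s + s ^ 2 := by
  have := abs_le.1 (Real.abs_exp_sub_one_sub_id_le h)
  linarith [this.2]

lemma tail_up' {q : Ω → ℝ} (hq : ∀ a, 0 ≤ q a) (h1 : ∑ a, q a = 1) (S : Finset Ω) (p η : ℝ)
    (hη : 0 < η) (hηp : η ≤ p) (hS : ∑ a ∈ S, q a ≤ p - η) (hl : 0 < l) :
    pr q (fun f : Fin l → Ω => l * (p - η / 2) ≤ cnt S f) ≤
      (4 * (∑ a ∈ S, q a) / p) * Real.exp (-(l * η ^ 2 / (16 * p))) := by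
  set x := ∑ a ∈ S, q a with hx
  have hx0 : 0 ≤ x := sumS_nonneg hq S
  have hp : 0 < p := by linarith
  have hlr : (0:ℝ) < l := by exact_mod_cast hl
  set s := η / (4 * p) with hs
  have hs0 : 0 < s := by positivity
  have hs4 : s ≤ 1 / 4 := by rw [hs, div_le_iff₀ (by positivity)]; linarith
  have ha : 0 < l * (p - η / 2) := by apply mul_pos hlr; linarith
  have h := tail_up (l := l) hq h1 S s _ hs0.le ha.le
  rw [← hx] at h
  have hE : Real.exp s - 1 ≤ s + s ^ 2 := exp_quad (by rw [abs_of_pos hs0]; linarith)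
  have hE0 : 0 ≤ Real.exp s - 1 := by linarith [Real.add_one_le_exp s]
  have hb1 : 1 ≤ 1 + x * (Real.exp s - 1) := by nlinarith
  have hpow : (1 + x * (Real.exp s - 1)) ^ (l - 1) ≤ Real.exp (l * ((p - η) * (s + s ^ 2))) := by
    calc _ ≤ (1 + x * (Real.exp s - 1)) ^ l := pow_le_pow_right₀ hb1 (by omega)
      _ ≤ (Real.exp ((p - η) * (s + s ^ 2))) ^ l := by
          apply pow_le_pow_left₀ (by linarith)
          have : x * (Real.exp s - 1) ≤ (p - η) * (s + s ^ 2) :=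
            mul_le_mul hS hE hE0 (by linarith)
          linarith [Real.add_one_le_exp ((p - η) * (s + s ^ 2))]
      _ = _ := by rw [← Real.exp_nat_mul]
  have hes : Real.exp s ≤ 2 := by
    have : s ^ 2 ≤ 1 := by nlinarith
    nlinarith
  have hexp : Real.exp (-(s * (l * (p - η / 2)))) * Real.exp (l * ((p - η) * (s + s ^ 2)))
      ≤ Real.exp (-(l * η ^ 2 / (16 * p))) := by
    rw [← Real.exp_add]
    apply Real.exp_le_exp.2
    have e1 : l * η ^ 2 / (16 * p) = l * (s * η / 2 - p * s ^ 2) := by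
      rw [hs]; field_simp; ring
    rw [e1]
    have : 0 ≤ l * (η * s ^ 2) := by positivity
    nlinarith
  have hlp : l * p / 2 ≤ l * (p - η / 2) := by nlinarith
  have hpr : 0 ≤ pr q (fun f : Fin l → Ω => l * (p - η / 2) ≤ cnt S f) := pr_nonneg hq _
  have h2 : l * p / 2 * pr q (fun f : Fin l → Ω => l * (p - η / 2) ≤ cnt S f)
      ≤ (l * (x * 2)) * Real.exp (-(l * η ^ 2 / (16 * p))) := by
    calc _ ≤ _ := mul_le_mul_of_nonneg_right hlp hpr
      _ ≤ _ := h
      _ ≤ Real.exp (-(s * (l * (p - η / 2)))) *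
          (l * (x * 2) * Real.exp (l * ((p - η) * (s + s ^ 2)))) := by gcongr
      _ = (l * (x * 2)) * (Real.exp (-(s * (l * (p - η / 2)))) *
          Real.exp (l * ((p - η) * (s + s ^ 2)))) := by ring
      _ ≤ _ := by gcongr
  rw [div_mul_eq_mul_div, le_div_iff₀ hp]
  have h3 : (l:ℝ) * (pr q (fun f : Fin l → Ω => l * (p - η / 2) ≤ cnt S f) * p) ≤
     l * (4 * x * Real.exp (-(l * η ^ 2 / (16 * p)))) := by nlinarith
  exact le_of_mul_le_mul_left h3 hlr

lemma tail_down {q : Ω → ℝ} (hq : ∀ a, 0 ≤ q a) (h1 : ∑ a, q a = 1) (S : Finset Ω) (η : ℝ)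
    (hη : 0 < η) (hηp : η ≤ ∑ a ∈ S, q a) :
    pr q (fun f : Fin l → Ω => (cnt S f : ℝ) ≤ l * ((∑ a ∈ S, q a) - η / 2)) ≤
      Real.exp (-(l * η ^ 2 / (16 * ∑ a ∈ S, q a))) := by
  set p := ∑ a ∈ S, q a with hp'
  have hp : 0 < p := by linarith
  set s := η / (4 * p) with hs
  have hs0 : 0 < s := by positivity
  have hs4 : s ≤ 1 / 4 := by rw [hs, div_le_iff₀ (by positivity)]; linarith
  have hp1 : p ≤ 1 := by
    rw [← h1]; exact Finset.sum_le_sum_of_subset_of_nonneg (subset_univ _) fun a _ _ => hq a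
  have hm := mgf (l := l) h1 S (-s)
  rw [← hp'] at hm
  have hE : Real.exp (-s) - 1 ≤ -s + (-s) ^ 2 :=
    exp_quad (by rw [abs_neg, abs_of_pos hs0]; linarith)
  have hb : 0 ≤ 1 + p * (Real.exp (-s) - 1) := by nlinarith [Real.exp_pos (-s)]
  have hpow : (1 + p * (Real.exp (-s) - 1)) ^ l ≤ Real.exp (l * (p * (-s + s ^ 2))) := by
    rw [Real.exp_nat_mul]
    apply pow_le_pow_left₀ hb
    have : p * (Real.exp (-s) - 1) ≤ p * (-s + s ^ 2) := by
      apply mul_le_mul_of_nonneg_left _ hp.le; linarith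
    linarith [Real.add_one_le_exp (p * (-s + s ^ 2))]
  have h2 : pr q (fun f : Fin l → Ω => (cnt S f : ℝ) ≤ l * (p - η / 2)) ≤
      Real.exp (s * (l * (p - η / 2))) * (1 + p * (Real.exp (-s) - 1)) ^ l := by
    rw [← hm, pr_eq_ite, Finset.mul_sum]
    apply Finset.sum_le_sum
    intro f _
    have hw := wt_nonneg hq f
    rw [mul_left_comm, ← Real.exp_add]
    apply mul_le_mul_of_nonneg_left _ hw
    split_ifs with h
    · apply Real.one_le_exp
      nlinarith
    · positivity
  refine h2.trans ((mul_le_mul_of_nonneg_left hpow (Real.exp_pos _).le).trans ?_)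
  rw [← Real.exp_add]
  apply Real.exp_le_exp.2
  have e1 : l * η ^ 2 / (16 * p) = l * (s * η / 2 - p * s ^ 2) := by
    rw [hs]; field_simp; ring
  rw [e1]
  apply le_of_eq; ring

end generic

section plurality
variable {C : Type*} [Fintype C] {l : ℕ}

/-- number of occurrences of a candidate -/
noncomputable def num (c : C) (f : Fin l → C) : ℕ := cnt {c} f

lemma num_eq (c : C) (f : Fin l → C) : num c f = #{j | f j = c} := by
  simp [num, cnt]

lemma num_swap (w x c : C) (f : Fin l → C) :
    num c (fun j => Equiv.swap w x (f j)) = num (Equiv.swap w x c) f := by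
  rw [num_eq, num_eq]
  congr 1
  ext j
  simp only [mem_filter, mem_univ, true_and]
  rw [Equiv.swap_apply_eq_iff]

lemma num_update_ne (c w : C) (f : Fin l → C) (j : Fin l) (hc : c ≠ w) (hj : f j ≠ c) :
    num c (Function.update f j w) = num c f := by
  rw [num_eq, num_eq]
  congr 1
  ext i
  by_cases h : i = j
  · subst h; simp [hc.symm, hj]
  · simp [h]

lemma num_update_self (w : C) (f : Fin l → C) (j : Fin l) (hj : f j ≠ w) :
    num w (Function.update f j w) = num w f + 1 := by
  rw [num_eq, num_eq, ← Finset.card_insert_of_notMem (a := j) (by simpa using hj)]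
  congr 1
  ext i
  by_cases h : i = j
  · subst h; simp
  · simp [h]

lemma num_update_old (x w : C) (f : Fin l → C) (j : Fin l) (hj : f j = x) (hx : x ≠ w) :
    num x (Function.update f j w) + 1 = num x f := by
  have := num_update_self x (Function.update f j w) j (by simpa using hx.symm)
  rw [← this]
  congr 1
  subst hj
  simp

lemma wt_update (q : C → ℝ) (x w : C) (f : Fin l → C) (j : Fin l) (hj : f j = x) :
    wt q (Function.update f j w) * q x = wt q f * q w := by
  unfold wt
  rw [← Finset.mul_prod_erase _ _ (mem_univ j), ← Finset.mul_prod_erase _ (fun i => q (f i)) (mem_univ j)]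
  rw [Finset.prod_congr rfl (s₁ := univ.erase j) (g := fun i => q (f i))
    (by intro i hi; rw [Function.update_of_ne (Finset.ne_of_mem_erase hi)])]
  simp [hj]; ring

lemma step_flip {q : C → ℝ} (hq : ∀ a, 0 ≤ q a) (w x : C) (hx : x ≠ w)
    (A B : Finset (Fin l → C))
    (hAB : ∀ h ∈ A, ∀ j, h j = x → Function.update h j w ∈ B) :
    ∑ h ∈ A, wt q h * (q w * (num x h / (num w h + 1))) ≤ q x * ∑ h ∈ B, wt q h := by
  set G : (Fin l → C) → ℝ := fun f => q x * wt q f / num w f with hG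
  have hG0 : ∀ f, 0 ≤ G f := fun f => by
    have := wt_nonneg hq f
    have := hq x
    positivity
  have e1 : ∀ h : Fin l → C, wt q h * (q w * (num x h / (num w h + 1)))
      = ∑ j, if h j = x then G (Function.update h j w) else 0 := by
    intro h
    have : ∀ j, (if h j = x then G (Function.update h j w) else 0)
        = if h j = x then wt q h * q w / (num w h + 1) else 0 := by
      intro j
      split_ifs with hj
      · simp only [hG]
        rw [num_update_self w h j (by rw [hj]; exact hx), mul_comm (q x), wt_update q x w h j hj]
        push_cast; rfl
      · rfl
    simp only [this]
    rw [← Finset.sum_filter, Finset.sum_const, ← num_eq, nsmul_eq_mul]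
    ring
  have e2 : ∀ f : Fin l → C, ∑ j, (if f j = w then G f else 0) ≤ q x * wt q f := by
    intro f
    rw [← Finset.sum_filter, Finset.sum_const, ← num_eq, nsmul_eq_mul]
    have h0 : 0 ≤ q x * wt q f := mul_nonneg (hq x) (wt_nonneg hq f)
    by_cases h : (num w f : ℝ) = 0
    · rw [h, zero_mul]; exact h0
    · simp only [hG]; rw [mul_div_cancel₀ _ h]
  simp only [e1]
  rw [Finset.mul_sum]
  refine le_trans ?_ (Finset.sum_le_sum fun f _ => e2 f)
  rw [Finset.sum_comm, Finset.sum_comm (s := B)]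
  apply Finset.sum_le_sum
  intro j _
  rw [← Finset.sum_filter, ← Finset.sum_filter]
  rw [← Finset.sum_image (f := G) (g := fun h => Function.update h j w)]
  · apply Finset.sum_le_sum_of_subset_of_nonneg
    · intro f hf
      simp only [mem_image, mem_filter] at hf
      obtain ⟨h, ⟨hA, hj⟩, rfl⟩ := hf
      simp [hAB h hA j hj]
    · intro f _ _; exact hG0 f
  · intro h hh h' hh' heq
    simp only [coe_filter, Set.mem_ofPred_eq] at hh hh'
    ext i
    by_cases hi : i = j
    · rw [hi, hh.2, hh'.2]
    · have := congrFun heq i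
      simpa [hi] using this

lemma wt_swap (q : C → ℝ) (w x : C) (hxw : x ≠ w) (hw : q w ≠ 0) (hx : q x ≠ 0) (f : Fin l → C)
    (hf : num w f ≤ num x f) :
    wt q (fun j => Equiv.swap w x (f j)) = wt q f * (q w / q x) ^ (num x f - num w f) := by
  have e : ∀ c, q (Equiv.swap w x c) =
      q c * ((if c = x then q w / q x else 1) * (if c = w then (q w / q x)⁻¹ else 1)) := by
    intro c
    by_cases h1 : c = x
    · subst h1; simp [hxw]; field_simp
    · by_cases h2 : c = w
      · subst h2; simp [h1]; field_simp
      · rw [Equiv.swap_apply_of_ne_of_ne h2 h1]; simp [h1, h2]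
  unfold wt
  simp only [e, Finset.prod_mul_distrib]
  congr 1
  rw [Finset.prod_ite, Finset.prod_ite]
  simp only [prod_const, ← num_eq]
  rw [inv_pow, pow_sub₀ _ (div_ne_zero hw hx) hf, one_pow, one_pow, mul_one, mul_one]

lemma base {q : C → ℝ} (hq : ∀ a, 0 ≤ q a) (w x : C) (hx : x ≠ w) (ε : ℝ) (hε : 0 < ε)
    (hgap : q x + ε ≤ q w)
    (A B : Finset (Fin l → C)) (κ : ℝ)
    (hA1 : ∀ f ∈ A, 1 ≤ num w f) (hA2 : ∀ f ∈ A, num w f ≤ num x f)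
    (hAB : ∀ f ∈ A, ∀ h, num w h = num x f + 1 → num x h + 1 = num w f →
      (∀ y, y ≠ w → y ≠ x → num y h = num y f) → h ∈ B)
    (hκ : ∀ f ∈ A, 0 < q x →
      κ ≤ (q w / q x) ^ (num x f - num w f) * (q w * (num w f / (num x f + 1)))) :
    κ * ∑ f ∈ A, wt q f ≤ q x * ∑ f ∈ B, wt q f := by
  have hB0 : 0 ≤ q x * ∑ f ∈ B, wt q f :=
    mul_nonneg (hq x) (Finset.sum_nonneg fun f _ => wt_nonneg hq f)
  rcases (hq x).eq_or_lt with h0 | h0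
  · have : ∑ f ∈ A, wt q f = 0 := by
      apply Finset.sum_eq_zero
      intro f hf
      have h1 : 0 < num x f := lt_of_lt_of_le (hA1 f hf) (hA2 f hf)
      rw [num_eq, Finset.card_pos] at h1
      obtain ⟨j, hj⟩ := h1
      simp at hj
      exact Finset.prod_eq_zero (mem_univ j) (by rw [hj, ← h0])
    rw [this, mul_zero]; exact hB0
  · have hw : 0 < q w := by linarith
    refine le_trans ?_ (step_flip hq w x hx
      (A.image fun f => fun j => Equiv.swap w x (f j)) B ?_)
    · rw [Finset.sum_image]
      · rw [Finset.mul_sum]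
        apply Finset.sum_le_sum
        intro f hf
        rw [wt_swap q w x hx hw.ne' h0.ne' f (hA2 f hf), num_swap, num_swap,
          Equiv.swap_apply_left, Equiv.swap_apply_right, mul_assoc, mul_comm]
        exact mul_le_mul_of_nonneg_left (hκ f hf h0) (wt_nonneg hq f)
      · intro f _ f' _ heq
        ext j
        exact (Equiv.swap w x).injective (congrFun heq j)
    · intro h hh j hj
      rw [mem_image] at hh
      obtain ⟨f, hf, rfl⟩ := hh
      have hj' : Equiv.swap w x (f j) = x := hj
      apply hAB f hf
      · rw [num_update_self _ _ _ (by rw [hj']; exact hx), num_swap, Equiv.swap_apply_left]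
      · rw [num_update_old x w _ j hj hx, num_swap, Equiv.swap_apply_right]
      · intro y hyw hyx
        rw [num_update_ne _ _ _ _ hyw (by rw [hj']; exact hyx.symm), num_swap,
          Equiv.swap_apply_of_ne_of_ne hyw hyx]

/-- `w` is the unique plurality winner of the sample -/
def win (w : C) (f : Fin l → C) : Prop := ∀ x, x ≠ w → num x f < num w f

/-- `x ≠ w` beats everyone weakly -/
def top (w x : C) (f : Fin l → C) : Prop :=
  num w f ≤ num x f ∧ ∀ y, y ≠ w → num y f ≤ num x f

lemma exists_top (w : C) (f : Fin l → C) (h : ¬ win w f) :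
    ∃ x ∈ univ.erase w, top w x f := by
  simp only [win, not_forall, not_lt] at h
  obtain ⟨x₀, hx₀, h₀⟩ := h
  obtain ⟨x, hx, hmax⟩ := Finset.exists_max_image (univ.erase w) (fun y => num y f)
    ⟨x₀, by simp [hx₀]⟩
  refine ⟨x, hx, h₀.trans (hmax _ (by simp [hx₀])), fun y hy => hmax _ (by simp [hy])⟩

lemma win_of_top {w x : C} (hx : x ≠ w) {f h : Fin l → C} (ht : top w x f)
    (h1 : num w h = num x f + 1) (h2 : num x h + 1 = num w f)
    (h3 : ∀ y, y ≠ w → y ≠ x → num y h = num y f) : win w h := by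
  intro y hy
  by_cases hyx : y = x
  · subst hyx; have := ht.1; omega
  · have := ht.2 y hy; rw [h3 y hy hyx]; omega

lemma ratio_pow {a b ε : ℝ} (hε : 0 < ε) (ha : 0 < a) (h : a + ε ≤ b) (d : ℕ) :
    1 + d * (ε / b) ≤ (b / a) ^ d := by
  have hb : 0 < b := by linarith
  have hr : 1 + ε / b ≤ b / a := by
    have h1 : a ≤ b - ε := by linarith
    have h2 : (1 + ε / b) * a ≤ b := by
      have : (1 + ε / b) * a ≤ (1 + ε / b) * (b - ε) :=
        mul_le_mul_of_nonneg_left h1 (by positivity)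
      have e : (1 + ε / b) * (b - ε) = b - ε ^ 2 / b := by field_simp; ring
      have : 0 ≤ ε ^ 2 / b := by positivity
      linarith
    rwa [le_div_iff₀ ha]
  have h0 : 0 ≤ ε / b := by positivity
  calc 1 + d * (ε / b) ≤ (1 + ε / b) ^ d := one_add_mul_le_pow (by linarith) d
    _ ≤ _ := pow_le_pow_left₀ (by linarith) hr d

lemma small_regime {q : C → ℝ} (hq : ∀ a, 0 ≤ q a) (h1 : ∑ a, q a = 1) (w : C) (ε : ℝ)
    (hε : 0 < ε) (hε1 : ε ≤ q w) (hgap : ∀ x, x ≠ w → q x + ε ≤ q w) :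
    ε / 2 * pr q (fun f : Fin l → C => ¬ win w f ∧ 1 ≤ num w f) ≤ pr q (win (l := l) w) := by
  have hw : 0 < q w := by linarith
  have key : ∀ x ∈ univ.erase w, ε / 2 * pr q (fun f : Fin l → C => top w x f ∧ 1 ≤ num w f)
      ≤ q x * pr q (win (l := l) w) := by
    intro x hx
    have hx : x ≠ w := Finset.ne_of_mem_erase hx
    apply base hq w x hx ε hε (hgap x hx)
    · intro f hf; simp at hf; exact hf.2
    · intro f hf; simp at hf; exact hf.1.1
    · intro f hf h a b c; simp at hf ⊢; exact win_of_top hx hf.1 a b c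
    · intro f hf hx0
      simp at hf
      obtain ⟨⟨hab, -⟩, hb⟩ := hf
      have hr := ratio_pow hε hx0 (hgap x hx) (num x f - num w f)
      obtain ⟨d, hd⟩ := Nat.exists_eq_add_of_le hab
      have hd' : num x f - num w f = d := by omega
      rw [hd'] at hr ⊢
      rw [hd]
      push_cast
      set b : ℝ := (num w f : ℝ) with hbdef
      have hb' : (1:ℝ) ≤ b := by rw [hbdef]; exact_mod_cast hb
      set u := ε / q w with hu
      have hu0 : 0 < u := by positivity
      have hu1 : u ≤ 1 := by rw [hu, div_le_one hw]; exact hε1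
      have hεu : ε = u * q w := by rw [hu]; field_simp
      have hd0 : (0:ℝ) ≤ d := Nat.cast_nonneg d
      have : u / 2 ≤ (1 + d * u) * (b / (b + d + 1)) := by
        rw [mul_div_assoc', le_div_iff₀ (by positivity)]
        have i1 : u * (1 + d) ≤ 1 + d * u := by linarith
        have i2 : u * (1 + d) * b ≤ (1 + d * u) * b := mul_le_mul_of_nonneg_right i1 (by linarith)
        have i3 : u * (b + d) ≤ u * ((1 + d) * b) := by
          apply mul_le_mul_of_nonneg_left _ hu0.le
          nlinarith
        nlinarith
      calc ε / 2 = u / 2 * q w := by rw [hεu]; ring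
        _ ≤ ((1 + d * u) * (b / (b + d + 1))) * q w := by gcongr
        _ ≤ ((q w / q x) ^ d * (b / (b + d + 1))) * q w := by gcongr
        _ = _ := by ring
  have hwin := pr_nonneg hq (win (l := l) w)
  calc _ ≤ ε / 2 * ∑ x ∈ univ.erase w, pr q (fun f : Fin l → C => top w x f ∧ 1 ≤ num w f) := by
        apply mul_le_mul_of_nonneg_left _ (by linarith)
        refine le_trans (pr_mono hq ?_) (pr_exists hq _ _)
        rintro f ⟨hf, hf1⟩
        obtain ⟨x, hx, ht⟩ := exists_top w f hf
        exact ⟨x, hx, ht, hf1⟩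
    _ ≤ ∑ x ∈ univ.erase w, q x * pr q (win (l := l) w) := by
        rw [Finset.mul_sum]; exact Finset.sum_le_sum key
    _ ≤ ∑ x, q x * pr q (win (l := l) w) :=
        Finset.sum_le_sum_of_subset_of_nonneg (Finset.erase_subset _ _)
          fun x _ _ => mul_nonneg (hq x) hwin
    _ = _ := by rw [← Finset.sum_mul, h1, one_mul]

/-- the competitive candidates -/
noncomputable def comp (w : C) (θ : ℝ) (f : Fin l → C) : Finset C :=
  {x ∈ univ.erase w | θ - 1 ≤ num x f}

lemma big_regime {q : C → ℝ} (hq : ∀ a, 0 ≤ q a) (h1 : ∑ a, q a = 1) (w : C) (ε θ J : ℝ)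
    (hε : 0 < ε) (hε1 : ε ≤ q w) (hgap : ∀ x, x ≠ w → q x + ε ≤ q w) (hθ : 0 < θ)
    (hθε : q w ≤ θ * ε) (hJ : 0 < J)
    (hN : pr q (fun f : Fin l → C => (num w f : ℝ) < θ) ≤ 1 / 4)
    (hX : ∑ x ∈ univ.erase w, pr q (fun f : Fin l → C => θ - 1 ≤ num x f) ≤ J / 4) :
    1 / (4 * J + 2) ≤ pr q (win (l := l) w) := by
  have hw : 0 < q w := by linarith
  have key : ∀ x ∈ univ.erase w, 1 / 2 * pr q (fun f : Fin l → C => top w x f ∧ θ ≤ num w f ∧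
        (#(comp w θ f) : ℝ) ≤ J)
      ≤ pr q (fun f : Fin l → C => (win w f ∧ (#(comp w θ f) : ℝ) ≤ J) ∧ x ∈ comp w θ f) := by
    intro x hx
    have hxe := hx
    have hx : x ≠ w := Finset.ne_of_mem_erase hx
    rcases (hq x).eq_or_lt with h0 | h0
    · have hz : pr q (fun f : Fin l → C => top w x f ∧ θ ≤ num w f ∧
        (#(comp w θ f) : ℝ) ≤ J) = 0 := by
        apply Finset.sum_eq_zero
        intro f hf
        simp only [mem_filter, mem_univ, true_and] at hf
        have h2 : (0:ℝ) < num w f := lt_of_lt_of_le hθ hf.2.1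
        have h2 : 0 < num w f := by exact_mod_cast h2
        have h3 : 0 < num x f := lt_of_lt_of_le h2 hf.1.1
        rw [num_eq, Finset.card_pos] at h3
        obtain ⟨j, hj⟩ := h3
        simp at hj
        exact Finset.prod_eq_zero (mem_univ j) (by rw [hj, ← h0])
      rw [hz, mul_zero]; exact pr_nonneg hq _
    have hb := base (l := l) hq w x hx ε hε (hgap x hx)
      (univ.filter fun f : Fin l → C => top w x f ∧ θ ≤ num w f ∧ (#(comp w θ f) : ℝ) ≤ J)
      (univ.filter fun f : Fin l → C =>
        (win w f ∧ (#(comp w θ f) : ℝ) ≤ J) ∧ x ∈ comp w θ f) (q x * (1/2)) ?_ ?_ ?_ ?_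
    · rw [mul_assoc] at hb
      refine le_of_mul_le_mul_left ?_ h0
      unfold pr
      convert hb
      rfl
    · intro f hf
      simp only [mem_filter, mem_univ, true_and] at hf
      have h2 : (0:ℝ) < num w f := lt_of_lt_of_le hθ hf.2.1
      exact_mod_cast h2
    · intro f hf
      simp only [mem_filter, mem_univ, true_and] at hf
      exact hf.1.1
    · intro f hf h a b c
      simp only [mem_filter, mem_univ, true_and] at hf ⊢
      obtain ⟨ht, hθw, hcJ⟩ := hf
      have hb' : (num x h : ℝ) + 1 = num w f := by exact_mod_cast b
      have hxh : x ∈ comp w θ h := by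
        simp only [comp, mem_filter]
        exact ⟨hxe, by linarith⟩
      have hxf : x ∈ comp w θ f := by
        simp only [comp, mem_filter]
        have : (num w f : ℝ) ≤ num x f := by exact_mod_cast ht.1
        exact ⟨hxe, by linarith⟩
      have heq : comp w θ h = comp w θ f := by
        ext y
        by_cases hyx : y = x
        · subst hyx; simp [hxh, hxf]
        · simp only [comp, mem_filter]
          constructor
          · rintro ⟨h1, h2⟩
            refine ⟨h1, ?_⟩
            rwa [c y (Finset.ne_of_mem_erase h1) hyx] at h2
          · rintro ⟨h1, h2⟩
            refine ⟨h1, ?_⟩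
            rwa [c y (Finset.ne_of_mem_erase h1) hyx]
      exact ⟨⟨win_of_top hx ht a b c, by rw [heq]; exact hcJ⟩, hxh⟩
    · intro f hf hx0
      simp only [mem_filter, mem_univ, true_and] at hf
      obtain ⟨⟨hab, -⟩, hθb, -⟩ := hf
      have hr := ratio_pow hε hx0 (hgap x hx) (num x f - num w f)
      obtain ⟨d, hd⟩ := Nat.exists_eq_add_of_le hab
      have hd' : num x f - num w f = d := by omega
      rw [hd'] at hr ⊢
      rw [hd]
      push_cast
      set b : ℝ := (num w f : ℝ) with hbdef
      have hb0 : 0 < b := by linarith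
      have hb1 : 1 ≤ b := by
        have : 0 < num w f := by rw [hbdef] at hb0; exact_mod_cast hb0
        rw [hbdef]; exact_mod_cast this
      set u := ε / q w with hu
      have hu0 : 0 < u := by positivity
      have hbu : 1 ≤ b * u := by
        rw [hu, mul_div_assoc', le_div_iff₀ hw]
        nlinarith
      have hd0 : (0:ℝ) ≤ d := Nat.cast_nonneg d
      have : 1 / 2 ≤ (1 + d * u) * (b / (b + d + 1)) := by
        rw [mul_div_assoc', le_div_iff₀ (by positivity)]
        nlinarith
      calc q x * (1 / 2) ≤ q w * (1 / 2) := by linarith [hgap x hx]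
        _ ≤ q w * ((1 + d * u) * (b / (b + d + 1))) := by gcongr
        _ ≤ q w * ((q w / q x) ^ d * (b / (b + d + 1))) := by gcongr
        _ = _ := by ring
  set W := pr q (win (l := l) w) with hW
  have hsum : ∑ x ∈ univ.erase w,
      pr q (fun f : Fin l → C => (win w f ∧ (#(comp w θ f) : ℝ) ≤ J) ∧ x ∈ comp w θ f)
      ≤ J * W := by
    simp only [hW, pr_eq_ite]
    rw [Finset.sum_comm, Finset.mul_sum]
    apply Finset.sum_le_sum
    intro f _
    rw [← Finset.mul_sum, mul_left_comm]
    apply mul_le_mul_of_nonneg_left _ (wt_nonneg hq f)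
    by_cases hf : win w f
    · by_cases hc : (#(comp w θ f) : ℝ) ≤ J
      · simp only [hf, hc, true_and, if_true, mul_one]
        rw [← Finset.sum_filter, Finset.sum_const, nsmul_eq_mul, mul_one]
        refine le_trans ?_ hc
        exact_mod_cast Finset.card_le_card (fun y hy => (mem_filter.1 hy).2)
      · simp [hf, hc, hJ.le]
    · simp [hf]
  have hfail : 1 / 2 * pr q (fun f : Fin l → C => ¬ win w f ∧ θ ≤ num w f ∧
        (#(comp w θ f) : ℝ) ≤ J) ≤ J * W := by
    refine le_trans ?_ hsum
    refine le_trans ?_ (Finset.sum_le_sum key)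
    rw [← Finset.mul_sum]
    apply mul_le_mul_of_nonneg_left _ (by norm_num)
    refine le_trans (pr_mono hq ?_) (pr_exists hq _ _)
    rintro f ⟨hf, hf1⟩
    obtain ⟨x, hx, ht⟩ := exists_top w f hf
    exact ⟨x, hx, ht, hf1⟩
  have hmark : J * pr q (fun f : Fin l → C => J < (#(comp w θ f) : ℝ)) ≤ J / 4 := by
    refine le_trans ?_ hX
    simp only [pr_eq_ite]
    rw [Finset.sum_comm, Finset.mul_sum]
    apply Finset.sum_le_sum
    intro f _
    rw [← Finset.mul_sum, mul_left_comm]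
    apply mul_le_mul_of_nonneg_left _ (wt_nonneg hq f)
    rw [← Finset.sum_filter, Finset.sum_const, nsmul_eq_mul, mul_one]
    change _ ≤ (#(comp w θ f) : ℝ)
    split_ifs with h
    · linarith
    · simp
  have hmark' : pr q (fun f : Fin l → C => J < (#(comp w θ f) : ℝ)) ≤ 1 / 4 := by
    have : J * pr q (fun f : Fin l → C => J < (#(comp w θ f) : ℝ)) ≤ J * (1 / 4) := by linarith
    exact le_of_mul_le_mul_left this hJ
  have htot : (1:ℝ) ≤ W + pr q (fun f : Fin l → C => ¬ win w f ∧ θ ≤ num w f ∧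
        (#(comp w θ f) : ℝ) ≤ J) + 1 / 4 + 1 / 4 := by
    have hc := pr_compl (l := l) h1 (win w)
    have : pr q (fun f : Fin l → C => ¬ win w f) ≤
      pr q (fun f : Fin l → C => (¬ win w f ∧ θ ≤ num w f ∧
        (#(comp w θ f) : ℝ) ≤ J) ∨ ((num w f : ℝ) < θ ∨ J < (#(comp w θ f) : ℝ))) := by
      apply pr_mono hq
      intro f hf
      by_cases ha : (num w f : ℝ) < θ
      · tauto
      · by_cases hb : J < (#(comp w θ f) : ℝ)
        · tauto
        · left; exact ⟨hf, not_lt.1 ha, not_lt.1 hb⟩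
    have i1 := pr_or hq (fun f : Fin l → C => (¬ win w f ∧ θ ≤ num w f ∧
        (#(comp w θ f) : ℝ) ≤ J)) (fun f => ((num w f : ℝ) < θ ∨ J < (#(comp w θ f) : ℝ)))
    have i2 := pr_or hq (fun f : Fin l → C => (num w f : ℝ) < θ)
      (fun f => J < (#(comp w θ f) : ℝ))
    linarith
  rw [div_le_iff₀ (by positivity)]
  linarith
end plurality

section plurality2
variable {C : Type*} [Fintype C] {l : ℕ}

lemma exp_neg_le_quarter {t : ℝ} (h : 1.4 ≤ t) : Real.exp (-t) ≤ 1 / 4 := by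
  have h2 : Real.log 4 ≤ 1.4 := by
    have : Real.log 4 = 2 * Real.log 2 := by
      rw [show (4:ℝ) = 2 ^ 2 by norm_num, Real.log_pow]; norm_num
    rw [this]; linarith [Real.log_two_lt_d9]
  have : Real.exp (-t) ≤ Real.exp (-Real.log 4) := Real.exp_le_exp.2 (by linarith)
  rw [Real.exp_neg (Real.log 4), Real.exp_log (by norm_num)] at this
  linarith

lemma inv_mul_exp_le {z : ℝ} (hz : 0 < z) : Real.exp (-z) ≤ 1 / z := by
  rw [Real.exp_neg, ← one_div]
  apply one_div_le_one_div_of_le hz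
  linarith [Real.add_one_le_exp z]

lemma plurality_final {q : C → ℝ} (hq : ∀ a, 0 ≤ q a) (h1 : ∑ a, q a = 1) (w : C) (ε : ℝ)
    (hε : 0 < ε) (hε1 : ε ≤ q w) (hgap : ∀ x, x ≠ w → q x + ε ≤ q w) (hl : 0 < l)
    (hL : l * ε ^ 2 < 90) :
    l * ε ^ 2 / 6000 ≤ pr q (win (l := l) w) := by
  have hw : 0 < q w := by linarith
  have hlr : (0:ℝ) < l := by exact_mod_cast hl
  have hw1 : q w ≤ 1 := by
    rw [← h1]; exact Finset.single_le_sum (fun a _ => hq a) (mem_univ w)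
  have hL0 : 0 < l * ε ^ 2 := by positivity
  have hsub : ∑ x ∈ univ.erase w, q x ≤ 1 := by
    rw [← h1]
    exact Finset.sum_le_sum_of_subset_of_nonneg (Finset.erase_subset _ _) fun x _ _ => hq x
  have hsing : ∀ x, ∑ a ∈ ({x} : Finset C), q a = q x := fun x => Finset.sum_singleton _ _
  by_cases hle : l * ε < 32
  · -- few samples
    have hs := small_regime (l := l) hq h1 w ε hε hε1 hgap
    have hc := pr_compl (l := l) h1 (win w)
    have hz : pr q (fun f : Fin l → C => num w f = 0) ≤ Real.exp (-(l * ε)) := by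
      have h2 : pr q (fun f : Fin l → C => num w f = 0) = (1 - q w) ^ l := by
        have e : ∀ f : Fin l → C, wt q f * (if num w f = 0 then 1 else 0)
            = ∏ j, q (f j) * (if f j = w then 0 else 1) := by
          intro f
          rw [Finset.prod_mul_distrib, wt]
          congr 1
          rw [Finset.prod_ite]
          simp only [prod_const, ← num_eq, one_pow, mul_one]
          split_ifs with h
          · simp [h]
          · simp [h]
        have e' : pr q (fun f : Fin l → C => num w f = 0)
            = ∑ f : Fin l → C, ∏ j, q (f j) * (if f j = w then 0 else 1) := by
          rw [pr_eq_ite]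
          apply Finset.sum_congr rfl
          intro f _
          rw [← e f]
          congr
        rw [e', sum_prod_eq (fun _ a => q a * (if a = w then 0 else 1))]
        have : ∑ a, q a * (if a = w then 0 else 1) = 1 - q w := by
          have := sum_q_ite h1 {w} 0
          simp only [mem_singleton, Finset.sum_singleton] at this
          rw [this]; ring
        simp only [this]
        simp
      rw [h2, show -((l:ℝ) * ε) = l * (-ε) by ring, Real.exp_nat_mul]
      apply pow_le_pow_left₀ (by linarith)
      linarith [Real.add_one_le_exp (-ε)]
    have hz2 : Real.exp (-(l * ε)) ≤ 1 - l * ε / 33 := by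
      have hpos : 0 < l * ε := by positivity
      rw [Real.exp_neg]
      have i1 : (Real.exp (l * ε))⁻¹ ≤ (1 + l * ε)⁻¹ := by
        apply inv_anti₀ (by linarith)
        linarith [Real.add_one_le_exp (l * ε)]
      have i2 : (1 + l * ε)⁻¹ ≤ 1 - l * ε / 33 := by
        rw [inv_eq_one_div, div_le_iff₀ (by linarith)]
        nlinarith
      linarith
    have hf : pr q (fun f : Fin l → C => ¬ win w f) ≤
        pr q (fun f : Fin l → C => ¬ win w f ∧ 1 ≤ num w f)
         + pr q (fun f : Fin l → C => num w f = 0) := by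
      refine le_trans (pr_mono hq ?_) (pr_or hq _ _)
      intro f hf
      by_cases h : num w f = 0
      · exact Or.inr h
      · exact Or.inl ⟨hf, by omega⟩
    have hWn := pr_nonneg hq (win (l := l) w)
    set W := pr q (win (l := l) w)
    have i3 : l * ε / 33 - W ≤ pr q (fun f : Fin l → C => ¬ win w f ∧ 1 ≤ num w f) := by
      linarith
    have i4 : ε / 2 * (l * ε / 33 - W) ≤ W :=
      le_trans (mul_le_mul_of_nonneg_left i3 (by linarith)) hs
    nlinarith
  push Not at hle
  have hlw : 32 ≤ l * q w := le_trans hle (by gcongr)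
  by_cases hcase : 90 * q w ≤ l * ε ^ 2
  · -- gap dominates the deviation
    have hb := big_regime (l := l) hq h1 w ε (l * (q w - ε / 2) + 1) (256 / (l * ε ^ 2)) hε hε1 hgap
      (by nlinarith) (by nlinarith) (by positivity) ?_ ?_
    · refine le_trans ?_ hb
      rw [div_le_div_iff₀ (by norm_num) (by positivity)]
      have : l * ε ^ 2 * (4 * (256 / (l * ε ^ 2)) + 2) = 1024 + 2 * (l * ε ^ 2) := by
        field_simp; ring
      rw [this]; linarith
    · have := tail_down (l := l) hq h1 {w} (ε / 2) (by linarith) (by rw [hsing]; linarith)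
      rw [hsing] at this
      refine le_trans (pr_mono hq ?_) (this.trans ?_)
      · intro f hf
        change (num w f : ℝ) ≤ _
        nlinarith
      · apply exp_neg_le_quarter
        rw [le_div_iff₀ (by positivity)]
        nlinarith
    · have i1 : ∀ x ∈ univ.erase w,
          pr q (fun f : Fin l → C => l * (q w - ε / 2) + 1 - 1 ≤ num x f) ≤
            q x * (64 / (l * ε ^ 2)) := by
        intro x hx
        have hx : x ≠ w := Finset.ne_of_mem_erase hx
        have := tail_up' (l := l) hq h1 {x} (q w) ε hε hε1
          (by rw [hsing]; linarith [hgap x hx]) hl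
        rw [hsing] at this
        simp only [add_sub_cancel_right]
        refine le_trans this ?_
        have i2 := inv_mul_exp_le (z := l * ε ^ 2 / (16 * q w)) (by positivity)
        calc _ ≤ 4 * q x / q w * (1 / (l * ε ^ 2 / (16 * q w))) := by
              have := hq x
              gcongr
          _ = _ := by field_simp; ring
      refine le_trans (Finset.sum_le_sum i1) ?_
      rw [← Finset.sum_mul]
      calc _ ≤ 1 * (64 / (l * ε ^ 2)) := by gcongr
        _ = _ := by ring
  · push Not at hcase
    have hb := big_regime (l := l) hq h1 w ε (l * q w / 4 + 1) (16 / q w) hε hε1 hgap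
      (by positivity) (by nlinarith) (by positivity) ?_ ?_
    · refine le_trans ?_ hb
      rw [div_le_div_iff₀ (by norm_num) (by positivity)]
      have : q w * (4 * (16 / q w) + 2) = 64 + 2 * q w := by
        field_simp; ring
      have h5 : l * ε ^ 2 * (4 * (16 / q w) + 2) ≤ 90 * q w * (4 * (16 / q w) + 2) := by
        gcongr
      nlinarith
    · have := tail_down (l := l) hq h1 {w} (q w) hw (by rw [hsing])
      rw [hsing] at this
      refine le_trans (pr_mono hq ?_) (this.trans ?_)
      · intro f hf
        change (num w f : ℝ) ≤ _
        nlinarith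
      · apply exp_neg_le_quarter
        rw [le_div_iff₀ (by positivity)]
        nlinarith
    · have i1 : ∀ x ∈ univ.erase w,
          pr q (fun f : Fin l → C => l * q w / 4 + 1 - 1 ≤ num x f) ≤ q x * (4 / q w) := by
        intro x hx
        have := tail_markov (l := l) hq h1 {x} (l * q w / 4) (by positivity)
        rw [hsing] at this
        simp only [add_sub_cancel_right]
        change _ * pr q (fun f : Fin l → C => l * q w / 4 ≤ num x f) ≤ _ at this
        rw [mul_div_assoc', le_div_iff₀ hw]
        nlinarith
      refine le_trans (Finset.sum_le_sum i1) ?_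
      rw [← Finset.sum_mul]
      calc _ ≤ 1 * (4 / q w) := by gcongr
        _ = _ := by ring

end plurality2

section main
variable {Ω : Type*} [Fintype Ω] {l : ℕ}

/-- push forward along a labelling -/
lemma pr_map {C : Type*} [Fintype C] (q : Ω → ℝ) (c : Ω → C) (P : (Fin l → C) → Prop) :
    pr q (fun s : Fin l → Ω => P (fun j => c (s j)))
      = pr (fun y => ∑ a with c a = y, q a) P := by
  simp only [pr_eq_ite]
  have e : ∀ f : Fin l → C, wt (fun y => ∑ a with c a = y, q a) f =
      ∑ s : Fin l → Ω, if (fun j => c (s j)) = f then wt q s else 0 := by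
    intro f
    unfold wt
    simp only [Finset.sum_filter]
    rw [← sum_prod_eq (fun j a => if c a = f j then q a else 0)]
    apply Finset.sum_congr rfl
    intro s _
    split_ifs with h
    · apply Finset.prod_congr rfl
      intro j _
      rw [← h]; simp
    · have : ∃ j, c (s j) ≠ f j := by
        by_contra hc; push Not at hc; exact h (funext hc)
      obtain ⟨j, hj⟩ := this
      exact Finset.prod_eq_zero (mem_univ j) (by simp [hj])
  simp only [e, Finset.sum_mul]
  rw [Finset.sum_comm]
  apply Finset.sum_congr rfl
  intro s _
  simp only [ite_mul, zero_mul]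
  rw [Finset.sum_ite_eq]
  simp

/-- the standard regime, for any approval sets -/
lemma standard {m : Type*} [Fintype m] {q : Ω → ℝ} (hq : ∀ a, 0 ≤ q a) (h1 : ∑ a, q a = 1)
    (S : m → Finset Ω) (w : m) (k ε : ℝ) (hk : 1 ≤ k) (hε : 0 < ε)
    (hε1 : ε ≤ ∑ a ∈ S w, q a)
    (hgap : ∀ x, x ≠ w → ∑ a ∈ S x, q a + ε ≤ ∑ a ∈ S w, q a)
    (hsum : ∑ x, ∑ a ∈ S x, q a ≤ k) (hL : 90 ≤ l * ε ^ 2) :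
    pr q (fun f : Fin l → Ω => ¬ ∀ x, x ≠ w → cnt (S x) f < cnt (S w) f)
      ≤ k * Real.exp (-(l * ε ^ 2 / 64)) := by
  set p := ∑ a ∈ S w, q a with hp
  have hp0 : 0 < p := by linarith
  have hp1 : p ≤ 1 := by
    rw [← h1]; exact Finset.sum_le_sum_of_subset_of_nonneg (subset_univ _) fun a _ _ => hq a
  have hl : 0 < l := by
    rcases Nat.eq_zero_or_pos l with h | h
    · subst h; norm_num at hL
    · exact h
  have hL0 : 0 < l * ε ^ 2 := by linarith
  set L := l * ε ^ 2 with hLdef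
  have t1 := tail_down (l := l) hq h1 (S w) ε hε hε1
  rw [← hp] at t1
  have t2 : ∀ x ∈ univ.erase w, pr q (fun f : Fin l → Ω => l * (p - ε / 2) ≤ cnt (S x) f) ≤
      (∑ a ∈ S x, q a) * (4 / p * Real.exp (-(L / (16 * p)))) := by
    intro x hx
    have hx : x ≠ w := Finset.ne_of_mem_erase hx
    have := tail_up' (l := l) hq h1 (S x) p ε hε hε1 (by linarith [hgap x hx]) hl
    refine this.trans (le_of_eq ?_)
    ring
  have hfail : pr q (fun f : Fin l → Ω => ¬ ∀ x, x ≠ w → cnt (S x) f < cnt (S w) f) ≤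
      Real.exp (-(L / (16 * p))) + ∑ x ∈ univ.erase w,
        (∑ a ∈ S x, q a) * (4 / p * Real.exp (-(L / (16 * p)))) := by
    refine le_trans ?_ (add_le_add t1 (Finset.sum_le_sum t2))
    refine le_trans ?_ (add_le_add le_rfl (pr_exists hq _ _))
    refine le_trans (pr_mono hq ?_) (pr_or hq _ _)
    intro f hf
    simp only [not_forall, not_lt] at hf
    obtain ⟨x, hx, hf⟩ := hf
    by_cases h : (cnt (S w) f : ℝ) ≤ l * (p - ε / 2)
    · exact Or.inl h
    · right
      refine ⟨x, by simp [hx], ?_⟩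
      have : (cnt (S w) f : ℝ) ≤ cnt (S x) f := by exact_mod_cast hf
      push Not at h
      linarith
  have hsum2 : ∑ x ∈ univ.erase w, (∑ a ∈ S x, q a) ≤ k := by
    refine le_trans ?_ hsum
    exact Finset.sum_le_sum_of_subset_of_nonneg (Finset.erase_subset _ _)
      fun x _ _ => sumS_nonneg hq _
  rw [← Finset.sum_mul] at hfail
  have hE : Real.exp (-(L / (16 * p))) ≤ Real.exp (-(L / 32)) * (32 * p / L) := by
    have e : -(L / (16 * p)) = -(L / (32 * p)) + -(L / (32 * p)) := by field_simp; ring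
    rw [e, Real.exp_add]
    have i1 := inv_mul_exp_le (z := L / (32 * p)) (by positivity)
    rw [one_div_div] at i1
    have i2 : Real.exp (-(L / (32 * p))) ≤ Real.exp (-(L / 32)) := by
      apply Real.exp_le_exp.2
      apply neg_le_neg
      apply div_le_div_of_nonneg_left hL0.le (by positivity) (by linarith)
    gcongr
  have hE1 : Real.exp (-(L / (16 * p))) ≤ Real.exp (-(L / 32)) := by
    apply Real.exp_le_exp.2
    apply neg_le_neg
    apply div_le_div_of_nonneg_left hL0.le (by positivity) (by linarith)
  have hE2 : 4 / p * Real.exp (-(L / (16 * p))) ≤ 128 / L * Real.exp (-(L / 32)) := by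
    calc _ ≤ 4 / p * (Real.exp (-(L / 32)) * (32 * p / L)) := by gcongr
      _ = _ := by field_simp; ring
  have hE3 : 128 / L ≤ 2 := by rw [div_le_iff₀ hL0]; linarith
  have hE4 : Real.exp (-(L / 32)) ≤ Real.exp (-(L / 64)) * (1 / 4) := by
    have e : -(L / 32) = -(L / 64) + -(L / 64) := by ring
    rw [e, Real.exp_add]
    gcongr
    exact exp_neg_le_quarter (by rw [le_div_iff₀ (by norm_num)]; linarith)
  set E := Real.exp (-(L / 32)) with hEdef
  have hE0 : 0 < E := Real.exp_pos _
  calc _ ≤ E + k * (2 * E) := by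
        refine hfail.trans (add_le_add hE1 ?_)
        have : 4 / p * Real.exp (-(L / (16 * p))) ≤ 2 * E :=
          hE2.trans (mul_le_mul_of_nonneg_right hE3 hE0.le)
        have h0 : 0 ≤ 4 / p * Real.exp (-(L / (16 * p))) := by positivity
        exact mul_le_mul hsum2 this h0 (by linarith)
    _ ≤ k * (4 * E) := by nlinarith
    _ ≤ _ := by
        apply mul_le_mul_of_nonneg_left _ (by linarith)
        linarith

end main

section final

/-- the voters approving `x` -/
noncomputable def appr {m n : ℕ} (k : ℕ) (V : Fin n → Equiv.Perm (Fin m)) (x : Fin m) :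
    Finset (Fin n) := {i | ((V i) x : ℕ) < k}

lemma score_eq {m n : ℕ} (k : ℕ) (V : Fin n → Equiv.Perm (Fin m)) (x : Fin m) :
    kApprovalScore k V x = #(appr k V x) := by
  unfold kApprovalScore appr
  rw [Nat.card_eq_fintype_card, Fintype.card_subtype]

lemma score_sample {m n l : ℕ} (k : ℕ) (V : Fin n → Equiv.Perm (Fin m)) (x : Fin m)
    (s : Fin l → Fin n) :
    kApprovalScore k (fun j => V (s j)) x = cnt (appr k V x) s := by
  rw [score_eq]
  simp [appr, cnt]

lemma mov_gap {m n k : ℕ} {ε : ℝ} (V : Fin n → Equiv.Perm (Fin m)) (w x : Fin m) (hx : x ≠ w)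
    (h : kApprovalScore k V x < kApprovalScore k V w)
    (hmov : ∀ V' : Fin n → Equiv.Perm (Fin m),
      (∃ x : Fin m, x ≠ w ∧ kApprovalScore k V' w ≤ kApprovalScore k V' x) →
      ε * n ≤ (Nat.card {i : Fin n // V' i ≠ V i} : ℝ)) :
    (#(appr k V x) : ℝ) + ε * n ≤ #(appr k V w) := by
  rw [score_eq, score_eq] at h
  have hD : #(appr k V w) - #(appr k V x) ≤ #(appr k V w \ appr k V x) :=
    Finset.le_card_sdiff _ _
  obtain ⟨T, hT, hTc⟩ := Finset.exists_subset_card_eq hD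
  set V' : Fin n → Equiv.Perm (Fin m) :=
    fun i => if i ∈ T then (Equiv.swap w x).trans (V i) else V i with hV'
  have hTw : T ⊆ appr k V w := hT.trans Finset.sdiff_subset
  have hw' : appr k V' w ⊆ appr k V w \ T := by
    intro i hi
    by_cases hiT : i ∈ T
    · have h2 := hT hiT
      simp [appr, hV', hiT] at hi h2
      omega
    · simp [appr, hV', hiT] at hi ⊢
      exact hi
  have hx' : appr k V x ⊆ appr k V' x := by
    intro i hi
    by_cases hiT : i ∈ T
    · have h2 := hT hiT
      simp [appr] at hi h2
      omega
    · simp [appr, hV', hiT] at hi ⊢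
      exact hi
  have hle : kApprovalScore k V' w ≤ kApprovalScore k V' x := by
    rw [score_eq, score_eq]
    refine (Finset.card_le_card hw').trans (le_trans ?_ (Finset.card_le_card hx'))
    rw [Finset.card_sdiff_of_subset hTw]
    omega
  have h3 := hmov V' ⟨x, hx, hle⟩
  have h4 : Nat.card {i : Fin n // V' i ≠ V i} ≤ #T := by
    rw [Nat.card_eq_fintype_card, Fintype.card_subtype]
    apply Finset.card_le_card
    intro i hi
    by_contra hiT
    simp [hV', hiT] at hi
  rw [hTc] at h4
  have h5 : (Nat.card {i : Fin n // V' i ≠ V i} : ℝ) ≤ #(appr k V w) - #(appr k V x) := by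
    rw [← Nat.cast_sub h.le]; exact_mod_cast h4
  linarith

lemma sum_appr {m n k : ℕ} (V : Fin n → Equiv.Perm (Fin m)) :
    ∑ x, #(appr k V x) ≤ n * k := by
  have e : ∀ x, #(appr k V x) = ∑ i, if ((V i) x : ℕ) < k then 1 else 0 := by
    intro x; simp [appr]
  simp only [e]
  rw [Finset.sum_comm]
  have : ∀ i ∈ (univ : Finset (Fin n)), ∑ x, (if ((V i) x : ℕ) < k then 1 else 0) ≤ k := by
    intro i _
    rw [Equiv.sum_comp (V i) (fun y : Fin m => if (y : ℕ) < k then 1 else 0)]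
    rw [← Finset.card_filter]
    have : #(univ.filter fun y : Fin m => (y : ℕ) < k) ≤ #(range k) := by
      apply Finset.card_le_card_of_injOn (fun y : Fin m => (y : ℕ))
      · intro y hy; simpa using hy
      · intro a _ b _ hab; exact Fin.ext hab
    simpa using this
  refine (Finset.sum_le_sum this).trans ?_
  simp

lemma card_eq_pr {n l : ℕ} (hn : 0 < n) (P : (Fin l → Fin n) → Prop) :
    (Nat.card {s // P s} : ℝ) = (n : ℝ) ^ l * pr (fun _ : Fin n => 1 / (n : ℝ)) P := by
  have hn' : (n : ℝ) ≠ 0 := by positivity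
  rw [Nat.card_eq_fintype_card, Fintype.card_subtype]
  simp only [pr, wt, prod_const, card_univ, Fintype.card_fin, sum_const, nsmul_eq_mul]
  rw [mul_left_comm, ← mul_pow, mul_one_div_cancel hn', one_pow, mul_one]

end final
end KApp

theorem kapproval_sample_complexity :
    ∃ K : ℝ, 0 < K ∧
      ∀ (m n k : ℕ) (ε δ : ℝ), 0 < ε → ε < 1 → 0 < δ → δ < 1 →
      ∀ (V : Fin n → Equiv.Perm (Fin m)) (w : Fin m),
        (∀ x : Fin m, x ≠ w → kApprovalScore k V x < kApprovalScore k V w) →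
        (∀ V' : Fin n → Equiv.Perm (Fin m),
          (∃ x : Fin m, x ≠ w ∧ kApprovalScore k V' w ≤ kApprovalScore k V' x) →
          ε * n ≤ (Nat.card {i : Fin n // V' i ≠ V i} : ℝ)) →
        ∀ ℓ : ℕ, K * Real.log ((k : ℝ) / δ) / ε ^ 2 ≤ ℓ →
          (1 - δ) * (n : ℝ) ^ ℓ ≤
            (Nat.card {s : Fin ℓ → Fin n // ∀ x : Fin m, x ≠ w →
              (n : ℝ) / ℓ * (kApprovalScore k (fun j => V (s j)) x : ℝ)
                < (n : ℝ) / ℓ * (kApprovalScore k (fun j => V (s j)) w : ℝ)} : ℝ) := by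
  classical
  refine ⟨6000, by norm_num, ?_⟩
  intro m n k ε δ hε hε1 hδ hδ1 V w huniq hmov ℓ hℓ
  by_cases hm : ∀ x : Fin m, x = w
  · have : Nat.card {s : Fin ℓ → Fin n // ∀ x : Fin m, x ≠ w →
              (n : ℝ) / ℓ * (kApprovalScore k (fun j => V (s j)) x : ℝ)
                < (n : ℝ) / ℓ * (kApprovalScore k (fun j => V (s j)) w : ℝ)} = n ^ ℓ := by
      rw [Nat.card_congr (Equiv.subtypeUnivEquiv (fun s x hx => absurd (hm x) hx))]
      simp
    rw [this]
    push_cast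
    have : (0:ℝ) ≤ (n:ℝ) ^ ℓ := by positivity
    nlinarith
  push Not at hm
  obtain ⟨x₀, hx₀⟩ := hm
  have hpos : 0 < kApprovalScore k V w := lt_of_le_of_lt (Nat.zero_le _) (huniq x₀ hx₀)
  rw [KApp.score_eq, Finset.card_pos] at hpos
  obtain ⟨i₀, hi₀⟩ := hpos
  have hn : 0 < n := lt_of_le_of_lt (Nat.zero_le _) i₀.2
  have hk : 1 ≤ k := by
    simp [KApp.appr] at hi₀; omega
  have hnr : (0:ℝ) < n := by exact_mod_cast hn
  have hkr : (1:ℝ) ≤ k := by exact_mod_cast hk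
  have hkδ : 1 < (k:ℝ) / δ := by rw [lt_div_iff₀ hδ]; linarith
  have hlog : 0 < Real.log ((k:ℝ) / δ) := Real.log_pos hkδ
  have hLlog : 6000 * Real.log ((k:ℝ) / δ) ≤ ℓ * ε ^ 2 := by
    rwa [div_le_iff₀ (by positivity)] at hℓ
  have hl : 0 < ℓ := by
    rcases Nat.eq_zero_or_pos ℓ with h | h
    · subst h; norm_num at hLlog; linarith
    · exact h
  have hlr : (0:ℝ) < ℓ := by exact_mod_cast hl
  -- uniform weights
  set q : Fin n → ℝ := fun _ => 1 / (n:ℝ) with hqdef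
  have hq : ∀ a, 0 ≤ q a := fun a => by simp only [hqdef]; positivity
  have h1 : ∑ a, q a = 1 := by simp [hqdef]; field_simp
  have hS : ∀ T : Finset (Fin n), ∑ a ∈ T, q a = (T.card : ℝ) / n := by
    intro T; simp [hqdef]; ring
  have hgap : ∀ x, x ≠ w → ∑ a ∈ KApp.appr k V x, q a + ε ≤ ∑ a ∈ KApp.appr k V w, q a := by
    intro x hx
    have := KApp.mov_gap V w x hx (huniq x hx) hmov
    rw [hS, hS, div_add' _ _ _ hnr.ne']
    gcongr
  have hεw : ε ≤ ∑ a ∈ KApp.appr k V w, q a := by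
    have := hgap x₀ hx₀
    have := KApp.sumS_nonneg hq (KApp.appr k V x₀)
    linarith
  have hcard : (Nat.card {s : Fin ℓ → Fin n // ∀ x : Fin m, x ≠ w →
              (n : ℝ) / ℓ * (kApprovalScore k (fun j => V (s j)) x : ℝ)
                < (n : ℝ) / ℓ * (kApprovalScore k (fun j => V (s j)) w : ℝ)} : ℝ)
      = (n:ℝ) ^ ℓ * KApp.pr q (fun s : Fin ℓ → Fin n =>
          ∀ x, x ≠ w → KApp.cnt (KApp.appr k V x) s < KApp.cnt (KApp.appr k V w) s) := by
    rw [KApp.card_eq_pr hn]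
    congr 2
    ext s
    apply forall_congr'
    intro x
    apply imp_congr_right
    intro _
    rw [KApp.score_sample, KApp.score_sample, mul_lt_mul_iff_right₀ (by positivity), Nat.cast_lt]
  rw [hcard, mul_comm]
  apply mul_le_mul_of_nonneg_left _ (by positivity)
  by_cases hL : 90 ≤ ℓ * ε ^ 2
  · have hst := KApp.standard (l := ℓ) hq h1 (KApp.appr k V) w k ε hkr hε hεw hgap (by
      simp only [hS]
      rw [← Finset.sum_div, div_le_iff₀ hnr]
      have := KApp.sum_appr (k := k) V
      rw [mul_comm]
      exact_mod_cast this) hL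
    have hc := KApp.pr_compl (l := ℓ) h1 (fun s : Fin ℓ → Fin n =>
          ∀ x, x ≠ w → KApp.cnt (KApp.appr k V x) s < KApp.cnt (KApp.appr k V w) s)
    have hδ2 : (k:ℝ) * Real.exp (-(ℓ * ε ^ 2 / 64)) ≤ δ := by
      have i1 : Real.exp (-(ℓ * ε ^ 2 / 64)) ≤ Real.exp (-Real.log ((k:ℝ) / δ)) := by
        apply Real.exp_le_exp.2; linarith
      rw [Real.exp_neg (Real.log _), Real.exp_log (by linarith), inv_div] at i1
      calc _ ≤ (k:ℝ) * (δ / k) := by gcongr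
        _ = δ := by field_simp
    linarith
  · push Not at hL
    have hk1 : k = 1 := by
      by_contra hne
      have hk2 : (2:ℝ) ≤ k := by
        have : 2 ≤ k := by omega
        exact_mod_cast this
      have : Real.log 2 ≤ Real.log ((k:ℝ) / δ) := by
        apply Real.log_le_log (by norm_num)
        rw [le_div_iff₀ hδ]; nlinarith
      linarith [Real.log_two_gt_d9]
    subst hk1
    have hm0 : 0 < m := lt_of_le_of_lt (Nat.zero_le _) w.2
    set c : Fin n → Fin m := fun i => (V i).symm ⟨0, hm0⟩ with hc
    have hmem : ∀ i x, i ∈ KApp.appr 1 V x ↔ c i = x := by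
      intro i x
      simp only [KApp.appr, Finset.mem_filter, Finset.mem_univ, true_and, hc, Nat.lt_one_iff]
      rw [Equiv.symm_apply_eq, Fin.ext_iff, eq_comm]
    have hnum : ∀ x (s : Fin ℓ → Fin n),
        KApp.cnt (KApp.appr 1 V x) s = KApp.num x (fun j => c (s j)) := by
      intro x s
      rw [KApp.num_eq]
      simp only [KApp.cnt, hmem]
      congr
    set q' : Fin m → ℝ := fun y => ∑ a with c a = y, q a with hq'
    have hq'S : ∀ x, q' x = ∑ a ∈ KApp.appr 1 V x, q a := by
      intro x
      apply Finset.sum_congr _ (fun _ _ => rfl)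
      ext i; simp [hmem]
    have hpf := KApp.plurality_final (l := ℓ) (q := q')
      (fun y => Finset.sum_nonneg fun a _ => hq a)
      (by rw [← h1]; exact Finset.sum_fiberwise _ _ _) w ε hε (by rw [hq'S]; exact hεw)
      (by intro x hx; rw [hq'S, hq'S]; exact hgap x hx) hl hL
    have hmap := KApp.pr_map (l := ℓ) q c (KApp.win w)
    have heq : KApp.pr q (fun s : Fin ℓ → Fin n =>
          ∀ x, x ≠ w → KApp.cnt (KApp.appr 1 V x) s < KApp.cnt (KApp.appr 1 V w) s)
        = KApp.pr q' (KApp.win (l := ℓ) w) := by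
      simp only [hnum]
      convert hmap
      rfl
    rw [heq]
    have hlogδ : 1 - δ ≤ Real.log (((1:ℕ):ℝ) / δ) := by
      rw [Nat.cast_one, one_div, Real.log_inv]
      linarith [Real.log_le_sub_one_of_pos hδ]
    linarith
end

section
/- Consider an election with n votes (linear orders over the candidate set) under the maximin voting rule, and suppose its margin of victory is at least εn with winner w. Then for every candidate x ≠ w, s(w) − s(x) ≥ εn, where s(·) denotes the maximin score. -/
/-- Pairwise margin D(x,y): number of votes preferring x to y minus the number
preferring y to x. A vote is a permutation of `Fin m` (candidate `c` is ranked at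
position `v c`, position `0` being the top, so `v x < v y` means x is preferred). -/
noncomputable def pairMargin {m n : ℕ} (V : Fin n → Equiv.Perm (Fin m))
    (x y : Fin m) : ℝ :=
  (Nat.card {i : Fin n // (V i) x < (V i) y} : ℝ)
    - (Nat.card {i : Fin n // (V i) y < (V i) x} : ℝ)

/-- Maximin score of a candidate x: min over y ≠ x of D(x,y). -/
noncomputable def maximinScore {m n : ℕ} (V : Fin n → Equiv.Perm (Fin m))
    (x : Fin m) : ℝ :=
  ⨅ y : {y : Fin m // y ≠ x}, pairMargin V x (y : Fin m)

noncomputable def mmSgn {m : ℕ} (p : Equiv.Perm (Fin m)) (x y : Fin m) : ℤ :=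
  (if p x < p y then 1 else 0) - (if p y < p x then 1 else 0)

lemma mm_pairMargin_eq {m n : ℕ} (V : Fin n → Equiv.Perm (Fin m)) (x y : Fin m) :
    pairMargin V x y = ((∑ i, mmSgn (V i) x y : ℤ) : ℝ) := by
  unfold pairMargin mmSgn
  rw [Finset.sum_sub_distrib]
  simp [Nat.card_eq_fintype_card, Fintype.card_subtype]

lemma mm_score_le {m n : ℕ} (V : Fin n → Equiv.Perm (Fin m)) (x y : Fin m) (h : y ≠ x) :
    maximinScore V x ≤ pairMargin V x y :=
  ciInf_le (Set.finite_range (fun y : {y : Fin m // y ≠ x} => pairMargin V x (y : Fin m))).bddBelow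
    (⟨y, h⟩ : {y : Fin m // y ≠ x})

lemma mm_score_eq {m n : ℕ} (V : Fin n → Equiv.Perm (Fin m)) (x y : Fin m) (h : y ≠ x) :
    ∃ z, z ≠ x ∧ maximinScore V x = pairMargin V x z := by
  have : Nonempty {y : Fin m // y ≠ x} := ⟨⟨y, h⟩⟩
  obtain ⟨z, hz⟩ := exists_eq_ciInf_of_finite
    (f := fun y : {y : Fin m // y ≠ x} => pairMargin V x (y : Fin m))
  exact ⟨z, z.2, hz.symm⟩

lemma mm_perm {m : ℕ} (x w : Fin m) (h : x ≠ w) :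
    ∃ p : Equiv.Perm (Fin m), (∀ y, y ≠ x → p x < p y) ∧ (∀ y, y ≠ w → p y < p w) := by
  obtain _ | k := m
  · exact x.elim0
  have h0 : (0 : Fin (k+1)) ≠ Fin.last k := by
    intro h0
    have := congrArg Fin.val h0
    simp at this
    subst this
    exact h (Fin.ext (by omega))
  have haw : (0 : Fin (k+1)) ≠ Equiv.swap x 0 w := by
    intro e
    have e2 := Equiv.swap_apply_left x (0 : Fin (k+1))
    exact h ((Equiv.swap x 0).injective (e2.trans e))
  let p : Equiv.Perm (Fin (k+1)) :=
    (Equiv.swap x 0).trans (Equiv.swap (Equiv.swap x 0 w) (Fin.last k))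
  have hx : p x = 0 := by
    simp only [p, Equiv.trans_apply, Equiv.swap_apply_left]
    exact Equiv.swap_apply_of_ne_of_ne haw h0
  have hw : p w = Fin.last k := by
    simp only [p, Equiv.trans_apply, Equiv.swap_apply_left]
  refine ⟨p, fun y hy => ?_, fun y hy => ?_⟩
  · rw [hx]
    exact Fin.pos_iff_ne_zero.2 (fun e => hy (p.injective (e.trans hx.symm)))
  · rw [hw]
    exact Fin.lt_last_iff_ne_last.2 (fun e => hy (p.injective (e.trans hw.symm)))

lemma mm_sgn_le {m : ℕ} (p : Equiv.Perm (Fin m)) (x y : Fin m) : mmSgn p x y ≤ 1 := by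
  unfold mmSgn; split_ifs <;> simp

lemma mm_sgn_ge {m : ℕ} (p : Equiv.Perm (Fin m)) (x y : Fin m) : -1 ≤ mmSgn p x y := by
  unfold mmSgn; split_ifs <;> simp

lemma mm_sgn_one {m : ℕ} (p : Equiv.Perm (Fin m)) (x y : Fin m) (h : p x < p y) :
    mmSgn p x y = 1 := by
  simp [mmSgn, h, h.le]

lemma mm_sgn_neg {m : ℕ} (p : Equiv.Perm (Fin m)) (x y : Fin m) (h : p y < p x) :
    mmSgn p x y = -1 := by
  simp [mmSgn, h, h.le]


/-- If a maximin election with n votes has margin of victory at least εn and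
(unique) winner w, then s(w) - s(x) ≥ εn for every candidate x ≠ w, where s is the
maximin score. The margin of victory condition says: any profile in which w is no
longer the unique maximin winner differs from V in at least εn votes. -/
theorem maximin_mov_score_gap
    (m n : ℕ) (ε : ℝ) (V : Fin n → Equiv.Perm (Fin m)) (w : Fin m)
    (hw : ∀ x : Fin m, x ≠ w → maximinScore V x < maximinScore V w)
    (hMOV : ∀ V' : Fin n → Equiv.Perm (Fin m),
      (∃ x : Fin m, x ≠ w ∧ maximinScore V' w ≤ maximinScore V' x) →
      ε * n ≤ (Nat.card {i : Fin n // V' i ≠ V i} : ℝ)) :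
    ∀ x : Fin m, x ≠ w → ε * n ≤ maximinScore V w - maximinScore V x := by
  intro x hx
  obtain ⟨p, hpx, hpw⟩ := mm_perm x w hx
  obtain ⟨y, hyw, hy⟩ := mm_score_eq V w x hx
  obtain ⟨z, hzx, hz⟩ := mm_score_eq V x w hx.symm
  have hlt := hw x hx
  rw [mm_pairMargin_eq] at hy hz
  rw [hy, hz] at hlt ⊢
  set A : ℤ := ∑ i, mmSgn (V i) w y with hA
  set B : ℤ := ∑ i, mmSgn (V i) x z with hB
  have hBA : B < A := by exact_mod_cast hlt
  let S : Finset (Fin n) := Finset.univ.filter (fun i => V i w < V i y)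
  obtain ⟨T, hTS, hTc⟩ := Finset.exists_subset_card_eq
    (s := S) (n := min (A - B).toNat S.card) (min_le_right _ _)
  let V' : Fin n → Equiv.Perm (Fin m) := fun i => if i ∈ T then p else V i
  have hcard : Nat.card {i : Fin n // V' i ≠ V i} ≤ T.card := by
    rw [Nat.card_eq_fintype_card, Fintype.card_subtype]
    apply Finset.card_le_card
    intro i hi
    by_contra hn
    simp [V', hn] at hi
  have hTg : (T.card : ℤ) ≤ A - B := by omega
  have hx' : ∀ u, u ≠ x → ∑ i, mmSgn (V i) x u ≤ ∑ i, mmSgn (V' i) x u := by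
    intro u hu
    apply Finset.sum_le_sum
    intro i _
    by_cases hi : i ∈ T
    · simp only [V', hi, if_true]
      rw [mm_sgn_one p x u (hpx u hu)]
      exact mm_sgn_le _ _ _
    · simp [V', hi]
  have key : ∀ u, u ≠ x → ∑ i, mmSgn (V' i) w y ≤ ∑ i, mmSgn (V' i) x u := by
    intro u hu
    by_cases hc : (A - B).toNat ≤ S.card
    · have hT : (T.card : ℤ) = A - B := by omega
      have h1 : ∑ i, mmSgn (V' i) w y ≤ A - T.card := by
        have : (T.card : ℤ) = ∑ i, (if i ∈ T then (1 : ℤ) else 0) := by simp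
        rw [this, hA, ← Finset.sum_sub_distrib]
        apply Finset.sum_le_sum
        intro i _
        by_cases hi : i ∈ T
        · have hS := (Finset.mem_filter.1 (hTS hi)).2
          simp only [V', hi, if_true]
          rw [mm_sgn_neg p w y (hpw y hyw), mm_sgn_one _ _ _ hS]
          norm_num
        · simp [V', hi]
      have h2 : B ≤ ∑ i, mmSgn (V i) x u := by
        have := mm_score_le V x u hu
        rw [hz, mm_pairMargin_eq] at this
        exact_mod_cast this
      have h3 := hx' u hu
      omega
    · have hT : T = S := Finset.eq_of_subset_of_card_le hTS (by omega)
      apply Finset.sum_le_sum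
      intro i _
      have : V' i y < V' i w := by
        by_cases hi : i ∈ T
        · simp only [V', hi, if_true]
          exact hpw y hyw
        · simp only [V', hi, if_false]
          rw [hT] at hi
          have h4 : ¬ V i w < V i y := fun h => hi (Finset.mem_filter.2 ⟨Finset.mem_univ _, h⟩)
          exact lt_of_le_of_ne (not_lt.1 h4) (fun e => hyw ((V i).injective e))
      rw [mm_sgn_neg _ _ _ this]
      exact mm_sgn_ge _ _ _
  have hfin := hMOV V' ⟨x, hx, by
    obtain ⟨u, hux, hu⟩ := mm_score_eq V' x w hx.symm
    refine (mm_score_le V' w y hyw).trans ?_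
    rw [hu, mm_pairMargin_eq, mm_pairMargin_eq]
    exact_mod_cast key u hux⟩
  refine hfin.trans ?_
  have h5 : ((Nat.card {i : Fin n // V' i ≠ V i} : ℕ) : ℤ) ≤ A - B := by omega
  exact_mod_cast h5
end
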